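/- arXiv:2601.01133 — 3 statements merged into one kernel-verified Lean document; each statement's English description precedes it below -/
import Mathlib

section
/- Let G be a finite non-cyclic nilpotent group whose order is not a prime power. Then the diameter of the difference graph D(G) equals 2 if and only if the exponent of G is a square-free positive integer. -/
/-- Adjacency in the difference of the enhanced power graph and the power graph:
`⟨x, y⟩` is cyclic but neither of `x`, `y` is a power of the other. -/
def diffAdj {G : Type*} [Group G] (x y : G) : Prop :=
  IsCyclic (Subgroup.closure ({x, y} : Set G)) ∧
    (¬ ∃ k : ℤ, y = x ^ k) ∧ (¬ ∃ k : ℤ, x = y ^ k)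

/-- The vertex set of the difference graph `𝒟(G)`: the elements of `G` that are
non-isolated in the difference of the enhanced power graph and the power graph. -/
abbrev DiffVertex (G : Type*) [Group G] := {x : G // ∃ y, diffAdj x y}

/-- The difference graph `𝒟(G)` of a group `G`. -/
def diffGraph (G : Type*) [Group G] : SimpleGraph (DiffVertex G) :=
  SimpleGraph.fromRel (fun a b => diffAdj a.val b.val)

/-- A dominating set of a graph: every vertex is in `S` or adjacent to a vertex of `S`. -/
def IsDominatingSet {V : Type*} (Γ : SimpleGraph V) (S : Set V) : Prop :=
  ∀ v : V, v ∈ S ∨ ∃ u ∈ S, Γ.Adj u v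

/-- The domination number of a graph: the least size of a dominating set. -/
noncomputable def dominationNumber {V : Type*} (Γ : SimpleGraph V) : ℕ :=
  sInf {n : ℕ | ∃ S : Set V, IsDominatingSet Γ S ∧ S.ncard = n}

/-- A maximal cyclic subgroup: a cyclic subgroup not properly contained in
another cyclic subgroup. -/
def IsMaxCyclic {G : Type*} [Group G] (C : Subgroup G) : Prop :=
  IsCyclic C ∧ ∀ D : Subgroup G, IsCyclic D → C ≤ D → C = D

section DiffAux
open Subgroup

theorem aux_mem {G : Type*} [Group G] [Finite G] {g x y : G} (hx : x ∈ zpowers g)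
    (hy : y ∈ zpowers g) (h : orderOf x ∣ orderOf y) : x ∈ zpowers y := by
  obtain ⟨i, rfl⟩ := mem_zpowers_iff.1 hx
  rw [← mem_powers_iff_mem_zpowers] at hy
  obtain ⟨j, rfl⟩ := hy
  simp only at h ⊢
  have hN : 0 < orderOf g := orderOf_pos g
  have h1 : (g ^ i) ^ (orderOf (g ^ j)) = 1 := orderOf_dvd_iff_pow_eq_one.1 h
  rw [← zpow_natCast, ← zpow_mul, ← orderOf_dvd_iff_zpow_eq_one] at h1
  have h2 : orderOf (g ^ j) * Nat.gcd (orderOf g) j = orderOf g := by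
    rw [orderOf_pow, Nat.div_mul_cancel (Nat.gcd_dvd_left _ _)]
  have h3 : ((Nat.gcd (orderOf g) j : ℕ) : ℤ) ∣ i := by
    rw [← h2] at h1
    push_cast at h1
    rw [mul_comm] at h1
    have := orderOf_pos (g ^ j)
    exact Int.dvd_of_mul_dvd_mul_right (by positivity) h1
  obtain ⟨c, rfl⟩ := h3
  rw [zpow_mul]
  apply zpow_mem
  rw [Nat.gcd_eq_gcd_ab, zpow_add, zpow_mul, zpow_mul]
  simp

theorem aux_comm {G : Type*} [Group G] [Finite G] (hnil : Group.IsNilpotent G) {x y : G}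
    (h : (orderOf x).Coprime (orderOf y)) : Commute x y := by
  obtain ⟨e⟩ := (Group.isNilpotent_of_finite_tfae.out 0 4 rfl rfl).1 hnil
  suffices hh : Commute (e.symm x) (e.symm y) by
    have := hh.map e
    simpa using this
  funext p
  funext P
  have hp : Fact (p : ℕ).Prime := ⟨Nat.prime_of_mem_primeFactors p.2⟩
  have key : ∀ z : G, orderOf (e.symm z p P) ∣ orderOf z := by
    intro z
    apply orderOf_dvd_of_pow_eq_one
    have : (e.symm z) ^ orderOf z = 1 := by rw [← map_pow, pow_orderOf_eq_one, map_one]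
    have := congrFun (congrFun this p) P
    simpa using this
  obtain ⟨k, hk⟩ := (IsPGroup.iff_orderOf.1 P.isPGroup') (e.symm x p P)
  obtain ⟨l, hl⟩ := (IsPGroup.iff_orderOf.1 P.isPGroup') (e.symm y p P)
  have hc := Nat.Coprime.of_dvd (key x) (key y) h
  simp only [Pi.mul_apply]
  by_cases hk0 : k = 0
  · rw [hk0, pow_zero, orderOf_eq_one_iff] at hk
    rw [hk]; simp
  · by_cases hl0 : l = 0
    · rw [hl0, pow_zero, orderOf_eq_one_iff] at hl
      rw [hl]; simp
    · exfalso
      rw [hk, hl] at hc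
      have := Nat.Coprime.of_dvd (dvd_pow_self (p : ℕ) hk0) (dvd_pow_self (p : ℕ) hl0) hc
      rw [Nat.coprime_self] at this
      exact hp.out.one_lt.ne' this

theorem aux_cyc {G : Type*} [Group G] (x y : G) :
    IsCyclic (Subgroup.closure ({x, y} : Set G)) ↔ ∃ g, x ∈ zpowers g ∧ y ∈ zpowers g := by
  rw [Subgroup.isCyclic_iff_exists_zpowers_eq_top]
  constructor
  · rintro ⟨g, hg⟩
    exact ⟨g, hg ▸ subset_closure (by simp), hg ▸ subset_closure (by simp)⟩
  · rintro ⟨g, hx, hy⟩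
    have hle : closure ({x, y} : Set G) ≤ zpowers g := by
      rw [closure_le]
      rintro z (rfl | rfl) <;> assumption
    rw [← Subgroup.isCyclic_iff_exists_zpowers_eq_top]
    exact isCyclic_of_injective (Subgroup.inclusion hle) (Subgroup.inclusion_injective hle)

theorem aux_ord {G : Type*} [Group G] [Finite G] {x y : G} (h : x ∈ zpowers y) :
    orderOf x ∣ orderOf y := orderOf_dvd_of_mem_zpowers h

theorem aux_adj {G : Type*} [Group G] [Finite G] (x y : G) :
    diffAdj x y ↔ (∃ g, x ∈ zpowers g ∧ y ∈ zpowers g) ∧ ¬ orderOf y ∣ orderOf x ∧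
      ¬ orderOf x ∣ orderOf y := by
  have e : ∀ a b : G, (∃ k : ℤ, a = b ^ k) ↔ a ∈ zpowers b := by
    intro a b
    rw [mem_zpowers_iff]
    simp only [eq_comm]
  unfold diffAdj
  rw [aux_cyc, e, e]
  constructor
  · rintro ⟨⟨g, hx, hy⟩, h1, h2⟩
    exact ⟨⟨g, hx, hy⟩, fun h => h1 (aux_mem hy hx h), fun h => h2 (aux_mem hx hy h)⟩
  · rintro ⟨hg, h1, h2⟩
    exact ⟨hg, fun h => h1 (aux_ord h), fun h => h2 (aux_ord h)⟩

theorem aux_symm {G : Type*} [Group G] [Finite G] {x y : G} (h : diffAdj x y) : diffAdj y x := by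
  rw [aux_adj] at *
  obtain ⟨⟨g, h1, h2⟩, h3, h4⟩ := h
  exact ⟨⟨g, h2, h1⟩, h4, h3⟩

theorem aux_graph {G : Type*} [Group G] [Finite G] (x y : DiffVertex G) :
    (diffGraph G).Adj x y ↔ diffAdj x.1 y.1 := by
  unfold diffGraph
  rw [SimpleGraph.fromRel_adj]
  constructor
  · rintro ⟨-, h | h⟩
    · exact h
    · exact aux_symm h
  · intro h
    refine ⟨?_, Or.inl h⟩
    rintro rfl
    exact ((aux_adj _ _).1 h).2.1 dvd_rfl

theorem aux_cop {G : Type*} [Group G] [Finite G] {x y : G} (hxy : Commute x y)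
    (h : (orderOf x).Coprime (orderOf y)) : x ∈ zpowers (x * y) ∧ y ∈ zpowers (x * y) := by
  constructor
  · obtain ⟨m, hm⟩ := exists_pow_eq_self_of_coprime (x := x) (n := orderOf y) h.symm
    have : (x * y) ^ (orderOf y) = x ^ (orderOf y) := by
      rw [hxy.mul_pow, pow_orderOf_eq_one, mul_one]
    rw [← this] at hm
    have hz := pow_mem (pow_mem (mem_zpowers (x * y)) (orderOf y)) m
    rwa [hm] at hz
  · obtain ⟨m, hm⟩ := exists_pow_eq_self_of_coprime (x := y) (n := orderOf x) h
    have : (x * y) ^ (orderOf x) = y ^ (orderOf x) := by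
      rw [hxy.mul_pow, pow_orderOf_eq_one, one_mul]
    rw [← this] at hm
    have hz := pow_mem (pow_mem (mem_zpowers (x * y)) (orderOf x)) m
    rwa [hm] at hz

/-- Nontrivial elements of coprime order are adjacent. -/
theorem aux_cop_adj {G : Type*} [Group G] [Finite G] (hnil : Group.IsNilpotent G) {x y : G}
    (h : (orderOf x).Coprime (orderOf y)) (hx : orderOf x ≠ 1) (hy : orderOf y ≠ 1) :
    diffAdj x y := by
  rw [aux_adj]
  refine ⟨⟨x * y, aux_cop (aux_comm hnil h) h⟩, ?_, ?_⟩
  · intro hd; exact hy (Nat.Coprime.eq_one_of_dvd h.symm hd)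
  · intro hd; exact hx (Nat.Coprime.eq_one_of_dvd h hd)

theorem aux_primes {n : ℕ} (hn : 1 < n) (h : ¬ IsPrimePow n) (p : ℕ) :
    ∃ q, q.Prime ∧ q ∣ n ∧ q ≠ p := by
  by_contra! hc
  apply h
  rw [isPrimePow_iff_unique_prime_dvd]
  have h1 := Nat.exists_prime_and_dvd hn.ne'
  obtain ⟨r, hr, hrn⟩ := h1
  exact ⟨r, ⟨hr, hrn⟩, fun s hs => (hc s hs.1 hs.2).trans (hc r hr hrn).symm⟩

/-- A vertex whose order misses a prime (squarefree exponent). -/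
theorem aux_vertex {G : Type*} [Group G] [Finite G] (hsq : Squarefree (Monoid.exponent G))
    {x : G} (hx : ∃ y, diffAdj x y) :
    orderOf x ≠ 1 ∧ ∃ p, p.Prime ∧ p ∣ Nat.card G ∧ ¬ p ∣ orderOf x := by
  obtain ⟨y, hy⟩ := hx
  rw [aux_adj] at hy
  obtain ⟨-, h1, h2⟩ := hy
  refine ⟨fun h => h2 (h ▸ one_dvd _), ?_⟩
  by_contra! hc
  apply h1
  have hy : Squarefree (orderOf y) := hsq.squarefree_of_dvd (Monoid.order_dvd_exponent y)
  rw [← Nat.prod_primeFactors_of_squarefree hy]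
  refine (Finset.prod_dvd_prod_of_subset _ (orderOf x).primeFactors _ ?_).trans
    (Nat.prod_primeFactors_dvd _)
  intro p hp
  have hpp := Nat.prime_of_mem_primeFactors hp
  exact Nat.mem_primeFactors.2 ⟨hpp, hc p hpp
    ((Nat.dvd_of_mem_primeFactors hp).trans (orderOf_dvd_natCard y)), (orderOf_pos x).ne'⟩

theorem aux_dist {G : Type*} [Group G] [Finite G] (hnil : Group.IsNilpotent G)
    (hsq : Squarefree (Monoid.exponent G)) (x y : DiffVertex G) :
    (diffGraph G).edist x y ≤ 2 := by
  suffices h : (diffGraph G).Adj x y ∨ ∃ z, (diffGraph G).Adj x z ∧ (diffGraph G).Adj z y by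
    rcases h with h | ⟨z, h1, h2⟩
    · rw [SimpleGraph.edist_eq_one_iff_adj.2 h]; norm_num
    · simpa using SimpleGraph.edist_le (SimpleGraph.Walk.cons h1 (SimpleGraph.Walk.cons h2 .nil))
  suffices h : diffAdj x.1 y.1 ∨ ∃ z, diffAdj x.1 z ∧ diffAdj y.1 z by
    rcases h with h | ⟨z, h1, h2⟩
    · exact Or.inl ((aux_graph _ _).2 h)
    · exact Or.inr ⟨⟨z, _, aux_symm h1⟩, (aux_graph _ _).2 h1, (aux_graph _ _).2 (aux_symm h2)⟩
  obtain ⟨hx1, q, hq, hqG, hqx⟩ := aux_vertex hsq x.2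
  obtain ⟨hy1, p, hp, hpG, hpy⟩ := aux_vertex hsq y.2
  obtain ⟨x, hx⟩ := x
  obtain ⟨y, hy⟩ := y
  simp only at *
  by_cases hout : ∃ r, r.Prime ∧ r ∣ Nat.card G ∧ ¬ r ∣ orderOf x ∧ ¬ r ∣ orderOf y
  · obtain ⟨r, hr, hrG, hrx, hry⟩ := hout
    have := Fact.mk hr
    obtain ⟨z, hz⟩ := exists_prime_orderOf_dvd_card' r hrG
    right
    refine ⟨z, aux_cop_adj hnil ?_ hx1 (by rw [hz]; exact hr.ne_one),
      aux_cop_adj hnil ?_ hy1 (by rw [hz]; exact hr.ne_one)⟩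
    · rw [hz]; exact ((Nat.Prime.coprime_iff_not_dvd hr).2 hrx).symm
    · rw [hz]; exact ((Nat.Prime.coprime_iff_not_dvd hr).2 hry).symm
  by_cases hcop : (orderOf x).Coprime (orderOf y)
  · exact Or.inl (aux_cop_adj hnil hcop hx1 hy1)
  push Not at hout
  have hpx : p ∣ orderOf x := by
    by_contra hc
    exact hpy (hout p hp hpG hc)
  have hqy : q ∣ orderOf y := hout q hq hqG hqx
  obtain ⟨r, hr, hrx, hry⟩ := Nat.Prime.not_coprime_iff_dvd.1 hcop
  have hrp : r ≠ p := by rintro rfl; exact hpy hry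
  have hrq : r ≠ q := by rintro rfl; exact hqx hrx
  have hpq : p ≠ q := by rintro rfl; exact hqx hpx
  have hx' : orderOf (x ^ (orderOf x / p)) = p := orderOf_pow_orderOf_div (orderOf_pos x).ne' hpx
  have hy' : orderOf (y ^ (orderOf y / q)) = q := orderOf_pow_orderOf_div (orderOf_pos y).ne' hqy
  have hxm : x ^ (orderOf x / p) ∈ zpowers x := pow_mem (mem_zpowers x) _
  have hym : y ^ (orderOf y / q) ∈ zpowers y := pow_mem (mem_zpowers y) _
  generalize x ^ (orderOf x / p) = x' at *
  generalize y ^ (orderOf y / q) = y' at *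
  have hc1 : (orderOf x').Coprime (orderOf y') := by
    rw [hx', hy']; exact (Nat.coprime_primes hp hq).2 hpq
  have hcm := aux_comm hnil hc1
  have hz : orderOf (x' * y') = p * q := by
    rw [hcm.orderOf_mul_eq_mul_orderOf_of_coprime hc1, hx', hy']
  have hrpq : ¬ r ∣ p * q := by
    intro h
    rcases hr.dvd_mul.1 h with h | h
    · exact hrp ((Nat.prime_dvd_prime_iff_eq hr hp).1 h)
    · exact hrq ((Nat.prime_dvd_prime_iff_eq hr hq).1 h)
  right
  refine ⟨x' * y', (aux_adj _ _).2 ⟨?_, ?_, ?_⟩, (aux_adj _ _).2 ⟨?_, ?_, ?_⟩⟩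
  · have hc : (orderOf x).Coprime (orderOf y') := by
      rw [hy']; exact ((Nat.Prime.coprime_iff_not_dvd hq).2 hqx).symm
    obtain ⟨h1, h2⟩ := aux_cop (aux_comm hnil hc) hc
    exact ⟨_, h1, mul_mem ((zpowers_le.2 h1) hxm) h2⟩
  · rw [hz]; exact fun h => hqx ((dvd_mul_left _ _).trans h)
  · rw [hz]; exact fun h => hrpq (hrx.trans h)
  · have hc : (orderOf y).Coprime (orderOf x') := by
      rw [hx']; exact ((Nat.Prime.coprime_iff_not_dvd hp).2 hpy).symm
    obtain ⟨h1, h2⟩ := aux_cop (aux_comm hnil hc) hc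
    exact ⟨_, h1, mul_mem h2 ((zpowers_le.2 h1) hym)⟩
  · rw [hz]; exact fun h => hpy ((dvd_mul_right _ _).trans h)
  · rw [hz]; exact fun h => hrpq (hry.trans h)

theorem aux_lower {G : Type*} [Group G] [Finite G] (hnil : Group.IsNilpotent G)
    (hn : 1 < Nat.card G) (hpp : ¬ IsPrimePow (Nat.card G)) :
    ∃ x y : DiffVertex G, ¬ (diffGraph G).edist x y ≤ 1 := by
  obtain ⟨p, hp, hpG, hp2⟩ := aux_primes hn hpp 2
  obtain ⟨q, hq, hqG, hqp⟩ := aux_primes hn hpp p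
  have := Fact.mk hp
  have := Fact.mk hq
  obtain ⟨x, hx⟩ := exists_prime_orderOf_dvd_card' p hpG
  obtain ⟨z, hz⟩ := exists_prime_orderOf_dvd_card' q hqG
  have hc : p.Coprime q := (Nat.coprime_primes hp hq).2 hqp.symm
  have h1 : diffAdj x z := aux_cop_adj hnil (by rwa [hx, hz]) (by rw [hx]; exact hp.ne_one)
    (by rw [hz]; exact hq.ne_one)
  have h2 : diffAdj x⁻¹ z := aux_cop_adj hnil (by rwa [orderOf_inv, hx, hz])
    (by rw [orderOf_inv, hx]; exact hp.ne_one) (by rw [hz]; exact hq.ne_one)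
  refine ⟨⟨x, z, h1⟩, ⟨x⁻¹, z, h2⟩, ?_⟩
  rw [SimpleGraph.edist_le_one_iff_adj_or_eq, aux_graph, aux_adj]
  simp only [Subtype.mk.injEq]
  rintro (⟨-, h, -⟩ | h)
  · simp at h
  · have : x ^ 2 = 1 := by rw [pow_two]; nth_rewrite 1 [h]; simp
    have := orderOf_dvd_of_pow_eq_one this
    rw [hx] at this
    exact hp2 ((Nat.prime_dvd_prime_iff_eq hp Nat.prime_two).1 this)

theorem aux_far {G : Type*} [Group G] [Finite G] (hnil : Group.IsNilpotent G)
    (hn : 1 < Nat.card G) (hpp : ¬ IsPrimePow (Nat.card G))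
    (hsq : ¬ Squarefree (Monoid.exponent G)) :
    ∃ x y : DiffVertex G, 2 < (diffGraph G).edist x y := by
  rw [Nat.squarefree_iff_prime_squarefree] at hsq
  push Not at hsq
  obtain ⟨p, hp, hpe⟩ := hsq
  obtain ⟨a, ha⟩ : ∃ a : G, orderOf a = p ^ 2 := by
    obtain ⟨g, hg⟩ := hp.exists_orderOf_eq_pow_factorization_exponent G
    have h2 : p ^ 2 ∣ orderOf g := by
      rw [hg]
      apply pow_dvd_pow
      rw [← hp.pow_dvd_iff_le_factorization Monoid.exponent_ne_zero_of_finite, pow_two]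
      exact hpe
    exact ⟨_, orderOf_pow_orderOf_div (orderOf_pos g).ne' h2⟩
  obtain ⟨b, hb, hmax⟩ := Set.exists_max_image {b : G | ¬ p ∣ orderOf b} orderOf (Set.toFinite _)
    ⟨1, by simpa using hp.ne_one⟩
  simp only [Set.mem_ofPred_eq] at hb hmax
  have hb1 : orderOf b ≠ 1 := by
    obtain ⟨q, hq, hqG, hqp⟩ := aux_primes hn hpp p
    have := Fact.mk hq
    obtain ⟨z, hz⟩ := exists_prime_orderOf_dvd_card' q hqG
    have := hmax z (by
      rw [hz]; intro h; exact hqp ((Nat.prime_dvd_prime_iff_eq hp hq).1 h).symm)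
    rw [hz] at this
    have := hq.one_lt
    omega
  have hx : orderOf (a ^ p) = p := by
    rw [orderOf_pow_of_dvd hp.ne_zero (by rw [ha]; exact dvd_pow_self _ two_ne_zero), ha, pow_two,
      Nat.mul_div_cancel _ hp.pos]
  have hpb : p.Coprime (orderOf b) := (Nat.Prime.coprime_iff_not_dvd hp).2 hb
  have hcx : (orderOf (a ^ p)).Coprime (orderOf b) := by rwa [hx]
  have hcm := aux_comm hnil hcx
  have hy : orderOf (a ^ p * b) = p * orderOf b := by
    rw [hcm.orderOf_mul_eq_mul_orderOf_of_coprime hcx, hx]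
  have h1 : diffAdj (a ^ p) b := aux_cop_adj hnil hcx (by rw [hx]; exact hp.ne_one) hb1
  have h2 : diffAdj (a ^ p * b) a := by
    rw [aux_adj]
    have hc : (orderOf a).Coprime (orderOf b) := by rw [ha]; exact hpb.pow_left 2
    obtain ⟨h3, h4⟩ := aux_cop (aux_comm hnil hc) hc
    refine ⟨⟨_, mul_mem (pow_mem h3 _) h4, h3⟩, ?_, ?_⟩
    · rw [hy, ha, pow_two]
      intro h
      exact hb (Nat.dvd_of_mul_dvd_mul_left hp.pos h)
    · rw [hy, ha]
      intro h
      exact hb1 (Nat.Coprime.eq_one_of_dvd (hpb.pow_left 2).symm ((dvd_mul_left _ _).trans h))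
  refine ⟨⟨_, _, h1⟩, ⟨_, _, h2⟩, ?_⟩
  rw [SimpleGraph.two_lt_edist_iff]
  refine ⟨?_, ?_, ?_⟩
  · intro h
    have := congrArg (fun t => orderOf t.1) h
    simp only [hx, hy] at this
    exact hb1 (Nat.eq_of_mul_eq_mul_left hp.pos (by rw [← this, mul_one]))
  · rw [aux_graph, aux_adj]
    rintro ⟨-, -, h⟩
    exact h (by simp only [hx, hy]; exact dvd_mul_right _ _)
  · rw [Set.eq_empty_iff_forall_notMem]
    intro z hz
    rw [SimpleGraph.mem_commonNeighbors, aux_graph, aux_graph, aux_adj, aux_adj] at hz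
    obtain ⟨z, hzv⟩ := z
    simp only [hx, hy] at hz
    obtain ⟨⟨-, -, h3⟩, ⟨h, hyh, hzh⟩, h4, -⟩ := hz
    have hbh : b ∈ zpowers h := (zpowers_le.2 hyh) (aux_cop hcm hcx).2
    have hcomm : Commute b z := by
      obtain ⟨i, rfl⟩ := mem_zpowers_iff.1 hbh
      obtain ⟨j, rfl⟩ := mem_zpowers_iff.1 hzh
      exact (Commute.refl h).zpow_zpow i j
    obtain ⟨c, -, hc⟩ := hcomm.exists_orderOf_eq_lcm
    have hle := hmax c (by
      rw [hc]; intro hd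
      rcases (Nat.Prime.dvd_lcm hp).1 hd with hd | hd
      · exact hb hd
      · exact h3 hd)
    have hdv : orderOf b ∣ orderOf c := hc ▸ Nat.dvd_lcm_left _ _
    have heq := le_antisymm hle (Nat.le_of_dvd (orderOf_pos c) hdv)
    have hzb : orderOf z ∣ orderOf b := by
      rw [← heq, hc]; exact Nat.dvd_lcm_right _ _
    exact h4 (hzb.trans (dvd_mul_left _ _))

end DiffAux

/-- Lemma 5.8: for a finite non-cyclic nilpotent group `G` whose order is not a prime
power, `diam(𝒟(G)) = 2` iff the exponent of `G` is square-free. -/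
theorem nilpotent_diffGraph_diam_eq_two_iff
    (G : Type*) [Group G] [Finite G] (hnil : Group.IsNilpotent G)
    (hnc : ¬ IsCyclic G) (hpp : ¬ IsPrimePow (Nat.card G)) :
    (diffGraph G).diam = 2 ↔ Squarefree (Monoid.exponent G) := by
  have hn : 1 < Nat.card G := by
    by_contra h
    have : Nat.card G = 1 := by have := Nat.card_pos (α := G); omega
    have := (Nat.card_eq_one_iff_unique.1 this).1
    exact hnc inferInstance
  constructor
  · intro h
    by_contra hsq
    obtain ⟨x, y, hxy⟩ := aux_far hnil hn hpp hsq
    have h3 := hxy.trans_le SimpleGraph.edist_le_ediam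
    unfold SimpleGraph.diam at h
    rw [ENat.toNat_eq_iff two_ne_zero] at h
    rw [h] at h3
    exact absurd h3 (by simp)
  · intro hsq
    obtain ⟨x, y, hxy⟩ := aux_lower hnil hn hpp
    have h1 : (diffGraph G).ediam ≤ 2 := SimpleGraph.ediam_le_of_edist_le (aux_dist hnil hsq)
    have h2 : ¬ (diffGraph G).ediam ≤ 1 := fun h => hxy (SimpleGraph.edist_le_ediam.trans h)
    unfold SimpleGraph.diam
    generalize (diffGraph G).ediam = d at h1 h2
    rw [ENat.toNat_eq_iff two_ne_zero]
    apply le_antisymm (by exact_mod_cast h1)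
    rw [not_le] at h2
    exact Order.add_one_le_of_lt h2
end

section
/- Let G be a finite non-cyclic nilpotent group whose order is not a prime power. Then D(G) is connected and: the diameter of D(G) equals 2 if the exponent of G is square-free; it equals 4 if G is a Ψ-group; and it equals 3 in all remaining cases. -/
/-- A `Ψ`-group: a group having a Sylow `p`-subgroup `P` with two distinct cyclic
subgroups of the same order, neither of which is a maximal cyclic subgroup of `P`. -/
def IsPsiGroup (G : Type*) [Group G] : Prop :=
  ∃ (p : ℕ), p.Prime ∧ ∃ (P : Sylow p G) (u v : G),
    u ∈ (P : Subgroup G) ∧ v ∈ (P : Subgroup G) ∧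
    Subgroup.zpowers u ≠ Subgroup.zpowers v ∧ orderOf u = orderOf v ∧
    (∃ w ∈ (P : Subgroup G), Subgroup.zpowers u < Subgroup.zpowers w) ∧
    (∃ w ∈ (P : Subgroup G), Subgroup.zpowers v < Subgroup.zpowers w)

namespace DG
open Function

section comb
variable {ι : Type*} {α : ι → Type*} [∀ i, Preorder (α i)] [∀ i, OrderBot (α i)]

def CAdj (x y : ∀ i, α i) : Prop :=
  (∀ i, x i ≤ y i ∨ y i ≤ x i) ∧ (∃ i, ¬ x i ≤ y i) ∧ (∃ i, ¬ y i ≤ x i)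

lemma CAdj.symm {x y : ∀ i, α i} (h : CAdj x y) : CAdj y x :=
  ⟨fun i => (h.1 i).symm, h.2.2, h.2.1⟩

def CJ (x : ∀ i, α i) (j : ι) : Prop := (∃ c, x j < c) ∧ ∃ i, i ≠ j ∧ ⊥ < x i

lemma CAdj.exJ {x y : ∀ i, α i} (h : CAdj x y) : ∃ j, CJ x j := by
  obtain ⟨h1, ⟨i, hi⟩, ⟨j, hj⟩⟩ := h
  refine ⟨j, ⟨y j, ?_⟩, i, ?_, ?_⟩
  · exact lt_of_le_not_ge ((h1 j).resolve_right hj) hj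
  · rintro rfl
    have := h1 i
    tauto
  · exact lt_of_le_not_ge bot_le fun h => hi (h.trans bot_le)

variable [DecidableEq ι]

def sg (j : ι) (c : α j) : ∀ i, α i := update (fun _ => ⊥) j c

lemma sg_same (j : ι) (c : α j) : sg j c j = c := by simp [sg]
lemma sg_ne {i j : ι} (h : i ≠ j) (c : α j) : sg j c i = ⊥ := by simp [sg, h]

lemma CJ.adj {x : ∀ i, α i} {j : ι} (h : CJ x j) {c : α j} (hc : x j < c) : CAdj x (sg j c) := by
  obtain ⟨-, i, hij, hi⟩ := h
  refine ⟨fun k => ?_, ⟨i, ?_⟩, ⟨j, ?_⟩⟩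
  · by_cases hk : k = j
    · subst hk; rw [sg_same]; exact Or.inl hc.le
    · rw [sg_ne hk]; exact Or.inr bot_le
  · rw [sg_ne hij]; exact hi.not_ge
  · rw [sg_same]; exact hc.not_ge

lemma sg_adj {i j : ι} (h : i ≠ j) {a : α i} {b : α j} (ha : ⊥ < a) (hb : ⊥ < b) :
    CAdj (sg i a) (sg j b) := by
  refine ⟨fun k => ?_, ⟨i, ?_⟩, ⟨j, ?_⟩⟩
  · by_cases hk : k = j
    · subst hk; rw [sg_ne h.symm]; exact Or.inl bot_le
    · rw [sg_ne hk]; exact Or.inr bot_le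
  · rw [sg_ne h, sg_same]; exact ha.not_ge
  · rw [sg_ne h.symm, sg_same]; exact hb.not_ge

/-- path of length 3 -/
lemma up3 {x y : ∀ i, α i} {j l : ι} (hx : CJ x j) (hy : CJ y l) (h : j ≠ l) :
    ∃ z w, CAdj x z ∧ CAdj z w ∧ CAdj w y := by
  obtain ⟨c, hc⟩ := hx.1
  obtain ⟨d, hd⟩ := hy.1
  exact ⟨_, _, hx.adj hc, sg_adj h (bot_le.trans_lt hc) (bot_le.trans_lt hd), (hy.adj hd).symm⟩

lemma up4 {x y : ∀ i, α i} {j : ι} (hx : CJ x j) (hy : CJ y j) :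
    ∃ z t w, CAdj x z ∧ CAdj z t ∧ CAdj t w ∧ CAdj w y := by
  obtain ⟨c, hc⟩ := hx.1
  obtain ⟨d, hd⟩ := hy.1
  obtain ⟨i, hij, hi⟩ := hx.2
  exact ⟨_, _, _, hx.adj hc, sg_adj hij.symm (bot_le.trans_lt hc) hi,
    sg_adj hij hi (bot_le.trans_lt hd), (hy.adj hd).symm⟩

lemma up2 {x y : ∀ i, α i} {j : ι} (hx : CJ x j) (hy : CJ y j) (h : x j ≤ y j ∨ y j ≤ x j) :
    ∃ z, CAdj x z ∧ CAdj z y := by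
  obtain ⟨c, hc⟩ := hx.1
  obtain ⟨d, hd⟩ := hy.1
  rcases h with h | h
  · exact ⟨_, hx.adj (h.trans_lt hd), (hy.adj hd).symm⟩
  · exact ⟨_, hx.adj hc, (hy.adj (h.trans_lt hc)).symm⟩

/-- flat case -/
lemma flat2 (hf : ∀ i (a b : α i), ⊥ < a → ¬ a < b) {x y : ∀ i, α i} {j l : ι}
    (hx : CJ x j) (hy : CJ y l) : CAdj x y ∨ ∃ z, CAdj x z ∧ CAdj z y := by
  classical
  obtain ⟨⟨c, hc⟩, i, hij, hi⟩ := hx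
  obtain ⟨⟨d, hd⟩, k, hkl, hk⟩ := hy
  have xj : ¬ ⊥ < x j := fun h => hf _ _ _ h hc
  have yl : ¬ ⊥ < y l := fun h => hf _ _ _ h hd
  have key : ∀ {i} {a : α i}, ¬ ⊥ < a → a ≤ ⊥ := fun {i a} h => by
    by_contra h'; exact h (lt_of_le_not_ge bot_le h')
  by_cases hU : ∃ m, ¬ ⊥ < x m ∧ ¬ ⊥ < y m ∧ ∃ e : α m, ⊥ < e
  · obtain ⟨m, h1, h2, e, he⟩ := hU
    right
    refine ⟨sg m e, CJ.adj ⟨⟨e, (key h1).trans_lt he⟩, i, ?_, hi⟩ ((key h1).trans_lt he),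
      (CJ.adj ⟨⟨e, (key h2).trans_lt he⟩, k, ?_, hk⟩ ((key h2).trans_lt he)).symm⟩
    · rintro rfl; exact h1 hi
    · rintro rfl; exact h2 hk
  have yj : ⊥ < y j := by
    by_contra h
    exact hU ⟨j, xj, h, c, bot_le.trans_lt hc⟩
  have xl : ⊥ < x l := by
    by_contra h
    exact hU ⟨l, h, yl, d, bot_le.trans_lt hd⟩
  by_cases hI : ∃ m, ⊥ < x m ∧ ⊥ < y m
  · obtain ⟨m, h1, h2⟩ := hI
    right
    have zdef : ∃ z : ∀ i, α i, ∀ i, ((⊥ < x i ∧ ⊥ < y i) → z i = ⊥) ∧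
        (⊥ < x i → ¬ ⊥ < y i → z i = x i) ∧ (¬ ⊥ < x i → z i = y i) := by
      refine ⟨fun i => if ⊥ < x i then (if ⊥ < y i then ⊥ else x i) else y i, fun i => ?_⟩
      refine ⟨fun h => by simp [h.1, h.2], fun h h' => by simp [h, h'], fun h => by simp [h]⟩
    obtain ⟨z, hz⟩ := zdef
    refine ⟨z, ⟨fun i => ?_, ⟨m, ?_⟩, ⟨j, ?_⟩⟩, ⟨fun i => ?_, ⟨l, ?_⟩, ⟨m, ?_⟩⟩⟩
    · by_cases a : ⊥ < x i
      · by_cases b : ⊥ < y i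
        · right; rw [(hz i).1 ⟨a, b⟩]; exact bot_le
        · right; rw [(hz i).2.1 a b]
      · left; exact (key a).trans bot_le
    · rw [(hz m).1 ⟨h1, h2⟩]; exact h1.not_ge
    · rw [(hz j).2.2 xj]; exact fun h => yj.not_ge (h.trans (key xj))
    · by_cases a : ⊥ < x i
      · by_cases b : ⊥ < y i
        · left; rw [(hz i).1 ⟨a, b⟩]; exact bot_le
        · right; exact (key b).trans bot_le
      · left; rw [(hz i).2.2 a]
    · rw [(hz l).2.1 xl yl]; exact fun h => xl.not_ge (h.trans (key yl))
    · rw [(hz m).1 ⟨h1, h2⟩]; exact h2.not_ge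
  · left
    refine ⟨fun i => ?_, ⟨l, fun h => xl.not_ge (h.trans (key yl))⟩,
      ⟨j, fun h => yj.not_ge (h.trans (key xj))⟩⟩
    by_cases a : ⊥ < x i
    · right
      exact (key (fun b => hI ⟨i, a, b⟩)).trans bot_le
    · left; exact (key a).trans bot_le

end comb

section graph
variable {V : Type*} {Γ : SimpleGraph V}

lemma ed1 {u v : V} (h : Γ.Adj u v) : Γ.edist u v ≤ 1 := (SimpleGraph.edist_eq_one_iff_adj.2 h).le
lemma ed2 {u v w : V} (h : Γ.Adj u v) (h' : Γ.Adj v w) : Γ.edist u w ≤ 2 :=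
  (SimpleGraph.edist_triangle (v := v)).trans ((add_le_add (ed1 h) (ed1 h')).trans (by norm_num))
lemma ed3 {u v w x : V} (h : Γ.Adj u v) (h' : Γ.Adj v w) (h'' : Γ.Adj w x) : Γ.edist u x ≤ 3 :=
  (SimpleGraph.edist_triangle (v := v)).trans ((add_le_add (ed1 h) (ed2 h' h'')).trans (by norm_num))
lemma ed4 {u v w x y : V} (h : Γ.Adj u v) (h' : Γ.Adj v w) (h'' : Γ.Adj w x) (h3 : Γ.Adj x y) :
    Γ.edist u y ≤ 4 :=
  (SimpleGraph.edist_triangle (v := v)).trans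
    ((add_le_add (ed1 h) (ed3 h' h'' h3)).trans (by norm_num))

lemma lo2 {u v : V} (hr : Γ.Reachable u v) (h0 : u ≠ v) (h1 : ¬ Γ.Adj u v) : 2 ≤ Γ.dist u v := by
  obtain ⟨p, hp⟩ := hr.exists_walk_length_eq_dist
  rw [← hp]
  by_contra hlt
  rcases p with _ | ⟨a, _ | ⟨b, p⟩⟩
  · exact h0 rfl
  · exact h1 a
  · simp at hlt

lemma lo3 {u v : V} (hr : Γ.Reachable u v) (h0 : u ≠ v) (h1 : ¬ Γ.Adj u v)
    (h2 : ∀ w, Γ.Adj u w → ¬ Γ.Adj w v) : 3 ≤ Γ.dist u v := by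
  obtain ⟨p, hp⟩ := hr.exists_walk_length_eq_dist
  rw [← hp]
  by_contra hlt
  rcases p with _ | ⟨a, _ | ⟨b, _ | ⟨c, p⟩⟩⟩
  · exact h0 rfl
  · exact h1 a
  · exact h2 _ a b
  · simp at hlt

lemma lo4 {u v : V} (hr : Γ.Reachable u v) (h0 : u ≠ v) (h1 : ¬ Γ.Adj u v)
    (h2 : ∀ w, Γ.Adj u w → ¬ Γ.Adj w v)
    (h3 : ∀ w z, Γ.Adj u w → Γ.Adj w z → ¬ Γ.Adj z v) : 4 ≤ Γ.dist u v := by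
  obtain ⟨p, hp⟩ := hr.exists_walk_length_eq_dist
  rw [← hp]
  by_contra hlt
  rcases p with _ | ⟨a, _ | ⟨b, _ | ⟨c, _ | ⟨d, p⟩⟩⟩⟩
  · exact h0 rfl
  · exact h1 a
  · exact h2 _ a b
  · exact h3 _ _ a b c
  · simp at hlt

lemma diam_of {n : ℕ} [Nonempty V] (hle : ∀ u v, Γ.edist u v ≤ n)
    (hge : ∃ u v, n ≤ Γ.dist u v) : Γ.diam = n := by
  have h1 : Γ.ediam ≤ n := SimpleGraph.ediam_le_of_edist_le hle
  have h2 : Γ.ediam ≠ ⊤ := fun h => by simp [h] at h1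
  apply le_antisymm
  · exact ENat.toNat_le_of_le_natCast h1
  · obtain ⟨u, v, h⟩ := hge
    exact h.trans (SimpleGraph.dist_le_diam h2)
end graph

section main
variable {ι : Type*} [Nontrivial ι] [DecidableEq ι]
  {α : ι → Type*} [∀ i, Preorder (α i)] [∀ i, OrderBot (α i)]

theorem core (hnt : ∀ i, ∃ a : α i, ⊥ < a) (hmax : ∀ i, ∃ m : α i, ∀ b, ¬ m < b)
    (htree : ∀ i (a b c : α i), a ≤ c → b ≤ c → a ≤ b ∨ b ≤ a)
    {V : Type*} (Γ : SimpleGraph V) (φ : V → ∀ i, α i)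
    (hφ : ∀ u v, Γ.Adj u v ↔ CAdj (φ u) (φ v))
    (hv : ∀ v, ∃ y, CAdj (φ v) y)
    (hs : ∀ x y, CAdj x y → ∃ v, φ v = x) :
    Γ.Connected ∧
    ((∀ i (a b : α i), ⊥ < a → ¬ a < b) → (∃ i, ∃ a b : α i, ¬ a ≤ b ∧ ¬ b ≤ a) → Γ.diam = 2) ∧
    ((∃ i, ∃ a b : α i, ¬ a ≤ b ∧ ¬ b ≤ a ∧ (∃ c, a < c) ∧ (∃ c, b < c)) → Γ.diam = 4) ∧
    ((¬ (∀ i (a b : α i), ⊥ < a → ¬ a < b)) →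
     (¬ (∃ i, ∃ a b : α i, ¬ a ≤ b ∧ ¬ b ≤ a ∧ (∃ c, a < c) ∧ (∃ c, b < c))) → Γ.diam = 3) := by
  have hJ : ∀ v, ∃ j, CJ (φ v) j := fun v => (hv v).choose_spec.exJ
  have hne : Nonempty V := by
    obtain ⟨i, j, hij⟩ := exists_pair_ne ι
    obtain ⟨a, ha⟩ := hnt i
    obtain ⟨b, hb⟩ := hnt j
    obtain ⟨v, -⟩ := hs _ _ (sg_adj hij ha hb)
    exact ⟨v⟩
  have L2 : ∀ u v, (∃ z, CAdj (φ u) z ∧ CAdj z (φ v)) → Γ.edist u v ≤ 2 := by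
    rintro u v ⟨z, h1, h2⟩
    obtain ⟨z, rfl⟩ := hs _ _ h2
    exact ed2 ((hφ _ _).2 h1) ((hφ _ _).2 h2)
  have L3 : ∀ u v, (∃ z w, CAdj (φ u) z ∧ CAdj z w ∧ CAdj w (φ v)) → Γ.edist u v ≤ 3 := by
    rintro u v ⟨z, w, h1, h2, h3⟩
    obtain ⟨z, rfl⟩ := hs _ _ h2
    obtain ⟨w, rfl⟩ := hs _ _ h3
    exact ed3 ((hφ _ _).2 h1) ((hφ _ _).2 h2) ((hφ _ _).2 h3)
  have L4 : ∀ u v, Γ.edist u v ≤ (4 : ℕ) := by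
    intro u v
    obtain ⟨j, hj⟩ := hJ u
    obtain ⟨l, hl⟩ := hJ v
    by_cases h : j = l
    · subst h
      obtain ⟨z, t, w, h1, h2, h3, h4⟩ := up4 hj hl
      obtain ⟨z, rfl⟩ := hs _ _ h2
      obtain ⟨t, rfl⟩ := hs _ _ h3
      obtain ⟨w, rfl⟩ := hs _ _ h4
      exact ed4 ((hφ _ _).2 h1) ((hφ _ _).2 h2) ((hφ _ _).2 h3) ((hφ _ _).2 h4)
    · exact (L3 _ _ (up3 hj hl h)).trans (by norm_num)
  have hconn : Γ.Connected := by
    apply SimpleGraph.connected_of_ediam_ne_top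
    intro h
    have := SimpleGraph.ediam_le_of_edist_le L4
    rw [h] at this
    simp at this
  have hlift : ∀ x j, CJ x j → ∃ v, φ v = x := by
    intro x j h
    obtain ⟨c, hc⟩ := h.1
    exact hs _ _ (h.adj hc)
  refine ⟨hconn, ?_, ?_, ?_⟩
  · rintro hf ⟨i, a, b, hab, hba⟩
    obtain ⟨j, hji⟩ := exists_ne i
    obtain ⟨c, hc⟩ := hnt j
    have ha : ⊥ < a := lt_of_le_not_ge bot_le fun h => hab (h.trans bot_le)
    have hb : ⊥ < b := lt_of_le_not_ge bot_le fun h => hba (h.trans bot_le)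
    apply diam_of
    · intro u v
      obtain ⟨j, hj⟩ := hJ u
      obtain ⟨l, hl⟩ := hJ v
      rcases flat2 hf hj hl with h | h
      · exact (ed1 ((hφ _ _).2 h)).trans (by norm_num)
      · exact L2 _ _ h
    · obtain ⟨u, hu⟩ := hs _ _ (sg_adj hji.symm ha hc)
      obtain ⟨v, hv⟩ := hs _ _ (sg_adj hji.symm hb hc)
      have h0 : ¬ (φ u i ≤ φ v i) := by rw [hu, hv, sg_same, sg_same]; exact hab
      have h1 : ¬ (φ v i ≤ φ u i) := by rw [hu, hv, sg_same, sg_same]; exact hba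
      refine ⟨u, v, lo2 (hconn.preconnected u v) ?_ ?_⟩
      · rintro rfl; exact h0 le_rfl
      · intro h
        exact (((hφ _ _).1 h).1 i).elim h0 h1
  · rintro ⟨i, a, b, hab, hba, ⟨a', haa⟩, b', hbb⟩
    apply diam_of L4
    choose m hm using hmax
    obtain ⟨j, hji⟩ := exists_ne i
    have hmj : ⊥ < m j := by
      obtain ⟨c, hc⟩ := hnt j
      by_contra h
      apply hm j c
      refine lt_of_le_of_lt ?_ hc
      by_contra h'; exact h (lt_of_le_not_ge bot_le h')
    have up : ∀ e : α i, (∃ e', e < e') → ∃ v, φ v = Function.update m i e := by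
      rintro e ⟨e', he⟩
      refine hlift _ i ⟨⟨e', by simpa using he⟩, j, hji, by simpa [hji] using hmj⟩
    have nb : ∀ (e : α i) y, CAdj (Function.update m i e) y → e ≤ y i := by
      intro e y h
      obtain ⟨k, hk⟩ := h.2.2
      have hlt := lt_of_le_not_ge ((h.1 k).resolve_right hk) hk
      by_cases hki : k = i
      · subst hki; simpa using hlt.le
      · rw [Function.update_of_ne hki] at hlt
        exact absurd hlt (hm _ _)
    obtain ⟨u, hu⟩ := up a ⟨_, haa⟩
    obtain ⟨v, hv⟩ := up b ⟨_, hbb⟩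
    have nu : ∀ w, Γ.Adj u w → a ≤ φ w i := fun w h => nb a _ (hu ▸ (hφ _ _).1 h)
    have nv : ∀ w, Γ.Adj w v → b ≤ φ w i := fun w h => nb b _ (hv ▸ (hφ _ _).1 h.symm)
    have hui : φ u i = a := by simp [hu]
    have hvi : φ v i = b := by simp [hv]
    refine ⟨u, v, lo4 (hconn.preconnected u v) ?_ ?_ ?_ ?_⟩
    · rintro rfl; exact hab (by rw [← hui, ← hvi])
    · intro h
      have := ((hφ _ _).1 h).1 i
      rw [hui, hvi] at this
      exact this.elim hab hba
    · intro w h h'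
      exact (htree _ _ _ _ (nu w h) (nv w h')).elim hab hba
    · intro w z h h' h''
      have h1 := nu w h
      have h2 := nv z h''
      rcases ((hφ _ _).1 h').1 i with h3 | h3
      · exact (htree _ _ _ _ (h1.trans h3) h2).elim hab hba
      · exact (htree _ _ _ _ h1 (h2.trans h3)).elim hab hba
  · intro hnf hnp
    push Not at hnf
    obtain ⟨i, a, a', ha, haa⟩ := hnf
    apply diam_of
    · intro u v
      obtain ⟨j, hj⟩ := hJ u
      obtain ⟨l, hl⟩ := hJ v
      by_cases h : j = l
      · subst h
        refine (L2 _ _ (up2 hj hl ?_)).trans (by norm_num)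
        by_contra hc
        push Not at hc
        exact hnp ⟨j, _, _, hc.1, hc.2, hj.1, hl.1⟩
      · exact (L3 _ _ (up3 hj hl h))
    · choose m hm using hmax
      obtain ⟨j, hji⟩ := exists_ne i
      obtain ⟨c, hc⟩ := hnt j
      have hmj : ⊥ < m j := by
        by_contra h
        apply hm j c
        refine lt_of_le_of_lt ?_ hc
        by_contra h'; exact h (lt_of_le_not_ge bot_le h')
      obtain ⟨u, hu⟩ : ∃ v, φ v = Function.update m i a :=
        hlift _ i ⟨⟨a', by simpa using haa⟩, j, hji, by simpa [hji] using hmj⟩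
      obtain ⟨v, hv⟩ := hs _ _ (sg_adj hji.symm ha hc)
      have nb : ∀ y, CAdj (Function.update m i a) y → a < y i := by
        intro y h
        obtain ⟨k, hk⟩ := h.2.2
        have hlt := lt_of_le_not_ge ((h.1 k).resolve_right hk) hk
        by_cases hki : k = i
        · subst hki; simpa using hlt
        · rw [Function.update_of_ne hki] at hlt
          exact absurd hlt (hm _ _)
      have nb' : ∀ y, CAdj (sg i a) y → y i < a := by
        intro y h
        obtain ⟨k, hk⟩ := h.2.1
        have hlt := lt_of_le_not_ge ((h.1 k).resolve_left hk) hk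
        by_cases hki : k = i
        · subst hki; simpa [sg] using hlt
        · rw [sg_ne hki] at hlt
          exact absurd bot_le hlt.not_ge
      have hui : φ u i = a := by simp [hu]
      refine ⟨u, v, lo3 (hconn.preconnected u v) ?_ ?_ ?_⟩
      · rintro rfl
        have := congrFun (hu.symm.trans hv) j
        rw [Function.update_of_ne hji, sg_ne hji] at this
        exact absurd hmj (by rw [this]; exact lt_irrefl _)
      · intro h
        have := nb' _ (hv ▸ (hφ _ _).1 h.symm)
        rw [hui] at this
        exact lt_irrefl _ this
      · intro w h h'
        exact lt_asymm (nb _ (hu ▸ (hφ _ _).1 h)) (nb' _ (hv ▸ (hφ _ _).1 h'.symm))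
end main
end DG
namespace DG
open Subgroup

@[reducible] def zpre (H : Type*) [Group H] : Preorder H where
  le a b := a ∈ zpowers b
  le_refl a := mem_zpowers a
  le_trans a b c h h' := (zpowers_le.2 h') h

@[reducible] def zbot (H : Type*) [Group H] : @OrderBot H (zpre H).toLE :=
  letI := zpre H
  { bot := 1, bot_le := fun a => one_mem (zpowers a) }

section
variable {H : Type*} [Group H]

lemma zp_eq [Finite H] {a b : H} (h : a ∈ zpowers b) (ho : orderOf b ≤ orderOf a) : b ∈ zpowers a := by
  have : zpowers a = zpowers b := by
    apply Subgroup.eq_of_le_of_card_ge (zpowers_le.2 h)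
    rw [Nat.card_zpowers, Nat.card_zpowers]; exact ho
  rw [this]; exact mem_zpowers b

lemma zp_ord {a b : H} (h : a ∈ zpowers b) : orderOf a ∣ orderOf b := orderOf_dvd_of_mem_zpowers h

lemma pow_gcd (z : H) (n : ℕ) : z ^ (n.gcd (orderOf z)) ∈ zpowers (z ^ n) := by
  refine ⟨n.gcdA (orderOf z), ?_⟩
  have := Nat.gcd_eq_gcd_ab n (orderOf z)
  simp only
  rw [← zpow_natCast z (n.gcd _), this, zpow_add, zpow_mul, zpow_mul]
  simp

lemma pgroup_tree [Finite H] {p : ℕ} (hp : p.Prime) (hH : IsPGroup p H) {a b c : H}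
    (ha : a ∈ zpowers c) (hb : b ∈ zpowers c) : a ∈ zpowers b ∨ b ∈ zpowers a := by
  classical
  haveI := Fact.mk hp
  obtain ⟨N, hN⟩ := IsPGroup.iff_orderOf.1 hH c
  rw [mem_zpowers_iff_mem_range_orderOf] at ha hb
  simp only [Finset.mem_image] at ha hb
  obtain ⟨m, -, rfl⟩ := ha
  obtain ⟨n, -, rfl⟩ := hb
  have h1 := pow_gcd c m
  have h2 := pow_gcd c n
  obtain ⟨i, -, hi⟩ := (Nat.dvd_prime_pow hp).1 (hN ▸ Nat.gcd_dvd_right m (orderOf c))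
  obtain ⟨j, -, hj⟩ := (Nat.dvd_prime_pow hp).1 (hN ▸ Nat.gcd_dvd_right n (orderOf c))
  have key : ∀ k l : ℕ, k ∣ l → c ^ l ∈ zpowers (c ^ k) := by
    rintro k _ ⟨t, rfl⟩
    rw [pow_mul]; exact pow_mem (mem_zpowers _) _
  rcases le_total i j with h | h
  · right
    exact zpowers_le.2 h1 (key _ _ ((show m.gcd (orderOf c) ∣ n.gcd (orderOf c) by rw [hN, hi, hj]; exact pow_dvd_pow p h).trans (Nat.gcd_dvd_left n (orderOf c))))
  · left
    exact zpowers_le.2 h2 (key _ _ ((show n.gcd (orderOf c) ∣ m.gcd (orderOf c) by rw [hN, hi, hj]; exact pow_dvd_pow p h).trans (Nat.gcd_dvd_left m (orderOf c))))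

lemma ord_total [Finite H] {p : ℕ} (hp : p.Prime) (hH : IsPGroup p H) (a b : H) :
    orderOf a ∣ orderOf b ∨ orderOf b ∣ orderOf a := by
  haveI := Fact.mk hp
  obtain ⟨m, hm⟩ := IsPGroup.iff_orderOf.1 hH a
  obtain ⟨n, hn⟩ := IsPGroup.iff_orderOf.1 hH b
  rw [hm, hn]
  exact (le_total m n).imp (pow_dvd_pow p) (pow_dvd_pow p)

lemma cyc_iff (x y : H) : IsCyclic (closure ({x, y} : Set H)) ↔
    ∃ z, x ∈ zpowers z ∧ y ∈ zpowers z := by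
  constructor
  · intro h
    obtain ⟨g, hg⟩ := (Subgroup.isCyclic_iff_exists_zpowers_eq_top _).1 h
    refine ⟨g, ?_, ?_⟩ <;> rw [hg] <;> exact subset_closure (by simp)
  · rintro ⟨z, hx, hy⟩
    have : closure ({x, y} : Set H) ≤ zpowers z := by
      rw [closure_le]; rintro t (rfl | rfl) <;> assumption
    exact isCyclic_of_injective (inclusion this) (inclusion_injective this)

lemma max_exists [Finite H] : ∃ m : H, ∀ b, m ∈ zpowers b → b ∈ zpowers m := by
  obtain ⟨m, hm⟩ := Finite.exists_max (fun a : H => orderOf a)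
  exact ⟨m, fun b h => zp_eq h (hm b)⟩
end

section
variable {ι : Type*} [Finite ι] {H : ι → Type*} [∀ i, Group (H i)] [∀ i, Finite (H i)]

lemma pi_zp {p : ι → ℕ} (hpi : Function.Injective p) (hp : ∀ i, (p i).Prime)
    (hH : ∀ i, IsPGroup (p i) (H i)) (x y : ∀ i, H i) :
    x ∈ zpowers y ↔ ∀ i, x i ∈ zpowers (y i) := by
  classical
  haveI := Fintype.ofFinite ι
  constructor
  · rintro ⟨k, rfl⟩ i
    exact ⟨k, rfl⟩
  · intro h
    have : ∀ i, ∃ k : ℕ, y i ^ k = x i := fun i => by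
      have := h i
      rw [mem_zpowers_iff_mem_range_orderOf] at this
      simp only [Finset.mem_image] at this
      obtain ⟨k, -, hk⟩ := this
      exact ⟨k, hk⟩
    choose k hk using this
    obtain ⟨K, hK⟩ := Nat.chineseRemainderOfFinset k (fun i => orderOf (y i)) Finset.univ
      (fun i _ => (orderOf_pos (y i)).ne') (by
        intro i _ j _ hij
        haveI := fun i => Fact.mk (hp i)
        obtain ⟨m, hm⟩ := IsPGroup.iff_orderOf.1 (hH i) (y i)
        obtain ⟨n, hn⟩ := IsPGroup.iff_orderOf.1 (hH j) (y j)
        simp only [Function.onFun, hm, hn]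
        exact Nat.Coprime.pow _ _ ((Nat.coprime_primes (hp i) (hp j)).2 fun h => hij (hpi h)))
    refine ⟨K, ?_⟩
    funext i
    simp only [zpow_natCast, Pi.pow_apply]
    rw [← hk i]
    exact pow_eq_pow_iff_modEq.2 (hK i (Finset.mem_univ i))

theorem grp {G : Type*} [Group G] [Finite G] (hnil : Group.IsNilpotent G) (hnc : ¬ IsCyclic G)
    [Nontrivial ι] {p : ι → ℕ} (hpi : Function.Injective p) (hp : ∀ i, (p i).Prime)
    (hH : ∀ i, IsPGroup (p i) (H i)) [∀ i, Nontrivial (H i)] (e : G ≃* ∀ i, H i) :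
    (diffGraph G).Connected ∧
    (Squarefree (Monoid.exponent G) → (diffGraph G).diam = 2) ∧
    (IsPsiGroup G → (diffGraph G).diam = 4) ∧
    (¬ Squarefree (Monoid.exponent G) → ¬ IsPsiGroup G → (diffGraph G).diam = 3) := by
  classical
  haveI := fun i => Fact.mk (hp i)
  have zp : ∀ x y : G, x ∈ zpowers y ↔ ∀ i, e x i ∈ zpowers (e y i) := by
    intro x y
    rw [← pi_zp hpi hp hH]
    constructor
    · rintro ⟨k, rfl⟩; exact ⟨k, by simp⟩
    · rintro ⟨k, hk⟩; exact ⟨k, e.injective (by simpa using hk)⟩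
  letI (i : ι) : Preorder (H i) := zpre (H i)
  letI (i : ι) : OrderBot (H i) := zbot (H i)
  have tree : ∀ i (a b c : H i), a ≤ c → b ≤ c → a ≤ b ∨ b ≤ a := fun i a b c h h' =>
    pgroup_tree (hp i) (hH i) h h'
  have bl : ∀ i (a : H i), ⊥ < a ↔ a ≠ 1 := by
    intro i a
    constructor
    · rintro ⟨-, h⟩ rfl; exact h (mem_zpowers _)
    · intro h; refine ⟨one_mem _, fun h' => h ?_⟩
      have h' : a ∈ zpowers (1 : H i) := h'
      simpa using h'
  have adj : ∀ x y : G, diffAdj x y ↔ CAdj (e x) (e y) := by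
    intro x y
    have h1 : (∃ k : ℤ, y = x ^ k) ↔ y ∈ zpowers x := by
      simp only [mem_zpowers_iff, eq_comm]
    have h2 : (∃ k : ℤ, x = y ^ k) ↔ x ∈ zpowers y := by
      simp only [mem_zpowers_iff, eq_comm]
    unfold diffAdj CAdj
    rw [h1, h2, cyc_iff, zp y x, zp x y, not_forall, not_forall]
    refine and_congr ?_ and_comm
    constructor
    · rintro ⟨z, hx, hy⟩ i
      exact tree i _ _ (e z i) ((zp _ _).1 hx i) ((zp _ _).1 hy i)
    · intro h
      refine ⟨e.symm fun i => if e x i ≤ e y i then e y i else e x i, (zp _ _).2 fun i => ?_,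
        (zp _ _).2 fun i => ?_⟩
      · simp only [MulEquiv.apply_symm_apply]
        split_ifs with h'
        · exact h'
        · exact mem_zpowers _
      · simp only [MulEquiv.apply_symm_apply]
        split_ifs with h'
        · exact mem_zpowers _
        · exact (h i).resolve_left h'
  have gadj : ∀ u v, (diffGraph G).Adj u v ↔ CAdj (e u.1) (e v.1) := by
    intro u v
    unfold diffGraph
    rw [SimpleGraph.fromRel_adj, adj, adj]
    constructor
    · rintro ⟨-, h | h⟩
      · exact h
      · exact h.symm
    · intro h
      refine ⟨?_, Or.inl h⟩
      rintro rfl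
      obtain ⟨i, hi⟩ := h.2.1
      exact hi le_rfl
  have C := core (α := H) (fun i => by
      obtain ⟨a, ha⟩ := exists_ne (1 : H i); exact ⟨a, (bl i a).2 ha⟩)
    (fun i => by
      obtain ⟨m, hm⟩ := max_exists (H := H i)
      exact ⟨m, fun b h => h.2 (hm b h.1)⟩) tree (diffGraph G) (fun v => e v.1) gadj
    (fun v => by obtain ⟨y, hy⟩ := v.2; exact ⟨e y, (adj _ _).1 hy⟩)
    (fun x y h => ⟨⟨e.symm x, e.symm y, (adj _ _).2 (by simpa using h)⟩, by simp⟩)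
  -- the embedding
  let s : ∀ i, H i →* G := fun i => e.symm.toMonoidHom.comp (MonoidHom.mulSingle H i)
  have sinj : ∀ i, Function.Injective (s i) := fun i =>
    e.symm.injective.comp (Pi.mulSingle_injective i)
  have szp : ∀ i (a b : H i), s i a ∈ zpowers (s i b) ↔ a ∈ zpowers b := by
    intro i a b
    constructor
    · rintro ⟨k, hk⟩; exact ⟨k, sinj i (by simpa using hk)⟩
    · rintro ⟨k, rfl⟩; exact ⟨k, by simp⟩
  have sq : (∀ i (a b : H i), ⊥ < a → ¬ a < b) ↔ Squarefree (Monoid.exponent G) := by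
    constructor
    · intro hf
      by_contra hns
      rw [Nat.squarefree_iff_prime_squarefree] at hns
      push Not at hns
      obtain ⟨q, hq, hqq⟩ := hns
      obtain ⟨g, hg⟩ := hq.exists_orderOf_eq_pow_factorization_exponent G
      have h2 : 2 ≤ (Monoid.exponent G).factorization q := by
        rw [← hq.pow_dvd_iff_le_factorization Monoid.exponent_ne_zero_of_finite, sq]
        exact hqq
      have hgq : g ^ q ≠ 1 := by
        intro h
        have := orderOf_dvd_of_pow_eq_one h
        rw [hg] at this
        have := Nat.le_of_dvd hq.pos this
        have h3 := Nat.pow_le_pow_right hq.pos h2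
        have := hq.two_le
        nlinarith
      have : ∃ i, (e g i) ^ q ≠ 1 := by
        by_contra h
        push Not at h
        exact hgq (e.injective (by rw [map_pow, map_one]; funext i; exact h i))
      obtain ⟨i, hi⟩ := this
      have hqo : q ∣ orderOf (e g i) := by
        have h1 : orderOf (e g i) ∣ q ^ (Monoid.exponent G).factorization q := by
          rw [← hg]
          apply orderOf_dvd_of_pow_eq_one
          rw [← Pi.pow_apply, ← map_pow, pow_orderOf_eq_one]; simp
        obtain ⟨n, -, hn⟩ := (Nat.dvd_prime_pow hq).1 h1
        rw [hn]
        rcases n with _ | n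
        · rw [pow_zero, orderOf_eq_one_iff] at hn
          rw [hn] at hi; simp at hi
        · exact dvd_pow_self _ (by simp)
      refine hf i (e g i ^ q) (e g i) ((bl _ _).2 hi) ⟨pow_mem (mem_zpowers _) _, fun h => ?_⟩
      have h1 := Nat.le_of_dvd (orderOf_pos _) (zp_ord h)
      rw [orderOf_pow_of_dvd hq.ne_zero hqo] at h1
      exact absurd h1 (Nat.div_lt_self (orderOf_pos _) hq.one_lt).not_ge
    · intro hsq i a b ha hab
      rw [bl] at ha
      obtain ⟨m, hm⟩ := IsPGroup.iff_orderOf.1 (hH i) b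
      have hb : orderOf b ∣ Monoid.exponent G := by
        rw [← orderOf_injective (s i) (sinj i) b]
        exact Monoid.order_dvd_exponent _
      have hb' : orderOf b ∣ p i := by
        have := hsq.squarefree_of_dvd hb
        rw [hm]
        by_cases hm1 : m ≤ 1
        · exact (pow_dvd_pow _ hm1).trans (by simp)
        · exfalso
          have h2 := this (p i) (by rw [hm, ← sq]; exact pow_dvd_pow _ (by omega))
          exact (hp i).one_lt.ne' (Nat.isUnit_iff.1 h2)
      apply hab.2
      apply zp_eq hab.1
      have h3 := (Nat.dvd_prime (hp i)).1 ((zp_ord hab.1).trans hb')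
      rw [orderOf_eq_one_iff] at h3
      rw [h3.resolve_left ha]
      exact Nat.le_of_dvd (hp i).pos hb'
  have nc : ∃ i, ∃ a b : H i, ¬ a ≤ b ∧ ¬ b ≤ a := by
    by_contra h
    push Not at h
    apply hnc
    have : ∀ i, ∃ m : H i, ∀ a, a ∈ zpowers m := by
      intro i
      obtain ⟨m, hm⟩ := max_exists (H := H i)
      refine ⟨m, fun a => ?_⟩
      by_cases h' : a ≤ m
      · exact h'
      · exact hm a (h i a m h')
    choose m hm using this
    refine ⟨e.symm m, fun x => (zp _ _).2 fun i => ?_⟩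
    simpa using hm i _
  have psi : IsPsiGroup G ↔
      (∃ i, ∃ a b : H i, ¬ a ≤ b ∧ ¬ b ≤ a ∧ (∃ c, a < c) ∧ (∃ c, b < c)) := by
    constructor
    · rintro ⟨q, hq, P, u, v, hu, hv, huv, ho, ⟨w, hw, huw⟩, ⟨w', hw', hvw⟩⟩
      haveI := Fact.mk hq
      have hqo : ∀ x ∈ (P : Subgroup G), ∀ i, e x i ≠ 1 → p i = q := by
        intro x hx i hi
        obtain ⟨n, hn⟩ := P.isPGroup' ⟨x, hx⟩
        have hn : x ^ q ^ n = 1 := by simpa using congrArg Subtype.val hn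
        have h1 : orderOf (e x i) ∣ q ^ n := by
          apply orderOf_dvd_of_pow_eq_one
          rw [← Pi.pow_apply, ← map_pow, hn]; simp
        obtain ⟨m, hm⟩ := IsPGroup.iff_orderOf.1 (hH i) (e x i)
        rcases m with _ | m
        · rw [pow_zero, orderOf_eq_one_iff] at hm; exact absurd hm hi
        · have : p i ∣ q ^ n := (hm ▸ dvd_pow_self (p i) (by simp : m + 1 ≠ 0)).trans h1
          exact (Nat.prime_dvd_prime_iff_eq (hp i) hq).1 ((hp i).dvd_of_dvd_pow this)
      have hw1 : w ≠ 1 := by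
        rintro rfl
        simp at huw
      have : ∃ i, e w i ≠ 1 := by
        by_contra h
        push Not at h
        exact hw1 (e.injective (by rw [map_one]; funext i; exact h i))
      obtain ⟨i, hi⟩ := this
      have hpq := hqo w hw i hi
      have ziff : ∀ x ∈ (P : Subgroup G), ∀ y ∈ (P : Subgroup G),
          (e x i ∈ zpowers (e y i) ↔ x ∈ zpowers y) := by
        intro x hx y hy
        rw [zp]
        refine ⟨fun h k => ?_, fun h => h i⟩
        by_cases hk : k = i
        · subst hk; exact h
        · have : e x k = 1 := by
            by_contra h'
            exact hk (hpi ((hqo x hx k h').trans hpq.symm))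
          rw [this]; exact one_mem _
      refine ⟨i, e u i, e v i, fun h => huv ?_, fun h => huv ?_, ⟨e w i, ?_, ?_⟩,
        ⟨e w' i, ?_, ?_⟩⟩
      · have h := (ziff u hu v hv).1 h
        exact le_antisymm (zpowers_le.2 h) (zpowers_le.2 (zp_eq h ho.ge))
      · have h := (ziff v hv u hu).1 h
        exact le_antisymm (zpowers_le.2 (zp_eq h ho.le)) (zpowers_le.2 h)
      · exact (ziff u hu w hw).2 (zpowers_le.1 huw.le)
      · exact fun h => huw.not_ge (zpowers_le.2 ((ziff w hw u hu).1 h))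
      · exact (ziff v hv w' hw').2 (zpowers_le.1 hvw.le)
      · exact fun h => hvw.not_ge (zpowers_le.2 ((ziff w' hw' v hv).1 h))
    · have aux : ∀ i (a b c d : H i), ¬ a ≤ b → a < c → b < d → orderOf a ∣ orderOf b →
          IsPsiGroup G := by
        intro i a b c d hab hac hbd ho
        obtain ⟨b', hb', ho'⟩ : ∃ b' ∈ zpowers b, orderOf b' = orderOf a :=
          ⟨b ^ (orderOf b / orderOf a), pow_mem (mem_zpowers _) _,
            orderOf_pow_orderOf_div (orderOf_pos b).ne' ho⟩
        obtain ⟨P⟩ : Nonempty (Sylow (p i) G) := inferInstance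
        have hP : ∀ x, s i x ∈ (P : Subgroup G) := by
          intro x
          have hn : (P : Subgroup G).Normal :=
            (Group.isNilpotent_of_finite_tfae (G := G) |>.out 0 3 rfl rfl).1 hnil (p i) (Fact.mk (hp i)) P
          have hr : IsPGroup (p i) (s i).range := (hH i).of_surjective _ (s i).rangeRestrict_surjective
          obtain ⟨Q, hQ⟩ := hr.exists_le_sylow
          haveI := P.unique_of_normal hn
          have : Q = P := Subsingleton.elim _ _
          rw [← this]
          exact hQ ⟨x, rfl⟩
        have slt : ∀ x y : H i, x < y → zpowers (s i x) < zpowers (s i y) := by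
          intro x y h
          refine lt_of_le_not_ge (zpowers_le.2 ((szp _ _ _).2 h.1)) fun h' => h.2 ?_
          exact (szp _ _ _).1 (zpowers_le.1 h')
        refine ⟨p i, hp i, P, s i a, s i b', hP _, hP _, ?_, ?_, ⟨s i c, hP _, slt _ _ hac⟩,
          ⟨s i d, hP _, slt _ _ (lt_of_le_of_lt hb' hbd)⟩⟩
        · intro h
          apply hab
          have : s i a ∈ zpowers (s i b') := h ▸ mem_zpowers _
          exact le_trans (α := H i) ((szp _ _ _).1 this) hb'
        · rw [orderOf_injective (s i) (sinj i), orderOf_injective (s i) (sinj i), ho']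
      rintro ⟨i, a, b, hab, hba, ⟨c, hc⟩, d, hd⟩
      rcases ord_total (hp i) (hH i) a b with h | h
      · exact aux i a b c d hab hc hd h
      · exact aux i b a d c hba hd hc h
  rw [← sq, psi]
  exact ⟨C.1, fun h => C.2.1 h nc, C.2.2.1, C.2.2.2⟩
end
end DG

/-- Theorem 5.9: for a finite non-cyclic nilpotent group `G` whose order is not a prime
power, `𝒟(G)` is connected, and its diameter equals `2` if `exp(G)` is square-free,
`4` if `G` is a `Ψ`-group, and `3` otherwise. -/
theorem nilpotent_diffGraph_diam
    (G : Type*) [Group G] [Finite G] (hnil : Group.IsNilpotent G)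
    (hnc : ¬ IsCyclic G) (hpp : ¬ IsPrimePow (Nat.card G)) :
    (diffGraph G).Connected ∧
    (Squarefree (Monoid.exponent G) → (diffGraph G).diam = 2) ∧
    (IsPsiGroup G → (diffGraph G).diam = 4) ∧
    (¬ Squarefree (Monoid.exponent G) → ¬ IsPsiGroup G → (diffGraph G).diam = 3) := by
  classical
  obtain ⟨e⟩ := (Group.isNilpotent_of_finite_tfae (G := G) |>.out 0 4).1 hnil
  have hc : 2 ≤ Nat.card G := by
    have h0 : 0 < Nat.card G := Nat.card_pos
    have h1 : Nat.card G ≠ 1 := fun h => by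
      haveI := (Nat.card_eq_one_iff_unique.1 h).1
      exact hnc inferInstance
    omega
  have hnt := (Nat.not_isPrimePow_iff_nontrivial_of_two_le hc).1 hpp
  haveI : Nontrivial (Nat.card G).primeFactors := by
    obtain ⟨a, ha, b, hb, hab⟩ := hnt
    exact ⟨⟨a, ha⟩, ⟨b, hb⟩, fun h => hab (congrArg Subtype.val h)⟩
  have hprime : ∀ q : (Nat.card G).primeFactors, (q : ℕ).Prime :=
    fun q => Nat.prime_of_mem_primeFactors q.2
  have hfact : ∀ q : (Nat.card G).primeFactors, Fact (q : ℕ).Prime := fun q => ⟨hprime q⟩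
  haveI : ∀ q : (Nat.card G).primeFactors, Nontrivial (∀ P : Sylow q G, (P : Subgroup G)) := by
    intro q
    haveI := hfact q
    have P0 : Sylow q G := default
    haveI : ∀ P : Sylow q G, Nontrivial (P : Subgroup G) := fun P => by
      rw [Subgroup.nontrivial_iff_ne_bot]
      exact P.ne_bot_of_dvd_card (Nat.dvd_of_mem_primeFactors q.2)
    exact Pi.nontrivial
  refine DG.grp (p := fun q : (Nat.card G).primeFactors => (q : ℕ)) hnil hnc
    Subtype.val_injective hprime (fun q => ?_) e.symm
  haveI := hfact q
  have hn := fun P : Sylow q G =>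
    (Group.isNilpotent_of_finite_tfae (G := G) |>.out 0 3 rfl rfl).1 hnil q (hfact q) P
  intro f
  haveI := (default : Sylow q G).unique_of_normal (hn _)
  obtain ⟨k, hk⟩ := (default : Sylow q G).isPGroup' (f default)
  refine ⟨k, ?_⟩
  funext P
  obtain rfl : P = default := Subsingleton.elim _ _
  exact hk
end

section
/- Let G be a finite non-cyclic abelian group whose order is not a prime power. Then the diameter of the difference graph D(G) equals 2 if the exponent of G is a square-free number; it equals 4 if G has a subgroup isomorphic to Z_{p²} × Z_{p²} for some prime p; and it equals 3 in all remaining cases. -/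
set_option linter.unusedSectionVars false

section DG
variable {G : Type*} [CommGroup G] [Finite G]

lemma dg_ex (n p : ℕ) (hn : n ≠ 0) : ∃ e : ℕ, e ≡ 1 [MOD ordProj[p] n] ∧ e ≡ 0 [MOD ordCompl[p] n] := by
  by_cases hp : p.Prime
  · have : Nat.Coprime (ordProj[p] n) (ordCompl[p] n) :=
      (Nat.coprime_ordCompl hp hn).pow_left _
    exact ⟨_, (Nat.chineseRemainder this 1 0).2⟩
  · refine ⟨0, ?_, rfl⟩
    rw [Nat.factorization_eq_zero_of_not_prime _ hp]
    simp [Nat.modEq_one]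

/-- the idempotent exponent -/
noncomputable def dgE (G : Type*) [CommGroup G] [Finite G] (p : ℕ) : ℕ :=
  (dg_ex (Nat.card G) p Nat.card_pos.ne').choose

lemma dgE_spec (p : ℕ) : dgE G p ≡ 1 [MOD ordProj[p] (Nat.card G)] ∧
    dgE G p ≡ 0 [MOD ordCompl[p] (Nat.card G)] :=
  (dg_ex (Nat.card G) p Nat.card_pos.ne').choose_spec

/-- component -/
noncomputable def pc (p : ℕ) : G →* G := powMonoidHom (dgE G p)

lemma pc_apply (p : ℕ) (x : G) : pc p x = x ^ dgE G p := rfl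

lemma pow_eq_one_of_card_dvd {m : ℕ} (h : Nat.card G ∣ m) (x : G) : x ^ m = 1 :=
  orderOf_dvd_iff_pow_eq_one.1 ((orderOf_dvd_natCard x).trans h)

lemma pc_pow (p : ℕ) (x : G) : (pc p x) ^ (ordProj[p] (Nat.card G)) = 1 := by
  rw [pc_apply, ← pow_mul]
  apply pow_eq_one_of_card_dvd
  have := (Nat.modEq_zero_iff_dvd.1 (dgE_spec (G := G) p).2)
  calc Nat.card G = ordCompl[p] (Nat.card G) * ordProj[p] (Nat.card G) := by
        rw [mul_comm, Nat.ordProj_mul_ordCompl_eq_self]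
    _ ∣ _ := Nat.mul_dvd_mul_right this _

lemma pc_eq_self_of_pow {p : ℕ} {x : G} (h : x ^ (ordProj[p] (Nat.card G)) = 1) : pc p x = x := by
  rw [pc_apply]
  have h1 := orderOf_dvd_iff_pow_eq_one.2 h
  have := (dgE_spec (G := G) p).1.of_dvd h1
  simpa using (pow_eq_pow_iff_modEq (x := x)).2 this

lemma pc_pc (p : ℕ) (x : G) : pc p (pc p x) = pc p x := pc_eq_self_of_pow (pc_pow p x)

lemma pc_eq_self {p k : ℕ} (hp : p.Prime) {x : G} (h : x ^ (p ^ k) = 1) : pc p x = x := by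
  apply pc_eq_self_of_pow
  obtain ⟨m, -, hm⟩ := (Nat.dvd_prime_pow hp).1 (orderOf_dvd_iff_pow_eq_one.2 h)
  rw [← orderOf_dvd_iff_pow_eq_one, hm]
  have : p ^ m ∣ Nat.card G := hm ▸ orderOf_dvd_natCard x
  exact pow_dvd_pow p ((hp.pow_dvd_iff_le_factorization Nat.card_pos.ne').1 this)

lemma dgE_dvd {p q : ℕ} (h : p ≠ q) : ordProj[q] (Nat.card G) ∣ dgE G p := by
  refine dvd_trans ?_ (Nat.modEq_zero_iff_dvd.1 (dgE_spec (G := G) p).2)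
  by_cases hq : q.Prime
  · rw [hq.pow_dvd_iff_le_factorization (Nat.ordCompl_pos p Nat.card_pos.ne').ne',
      Nat.factorization_ordCompl]
    simp [Finsupp.erase_ne h.symm]
  · simp [Nat.factorization_eq_zero_of_not_prime _ hq]

lemma pc_ne {p q : ℕ} (h : p ≠ q) (x : G) : pc p (pc q x) = 1 := by
  rw [pc_apply p]
  exact orderOf_dvd_iff_pow_eq_one.1
    ((orderOf_dvd_iff_pow_eq_one.2 (pc_pow q x)).trans (dgE_dvd h))

lemma dg_sum (x : G) : ∏ p ∈ (Nat.card G).primeFactors, pc p x = x := by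
  simp only [pc_apply, Finset.prod_pow_eq_pow_sum]
  conv_rhs => rw [← pow_one x]
  rw [pow_eq_pow_iff_modEq]
  refine Nat.ModEq.of_dvd (orderOf_dvd_natCard x) ?_
  rw [Nat.modEq_iff_dvd, ← Int.dvd_natAbs, Int.natCast_dvd_natCast]
  rw [Nat.dvd_iff_prime_pow_dvd_dvd]
  intro p k hp hk
  by_cases hk0 : k = 0
  · simp [hk0]
  have hle := (hp.pow_dvd_iff_le_factorization Nat.card_pos.ne').1 hk
  refine (pow_dvd_pow p hle).trans ?_
  rw [← Int.natCast_dvd_natCast, Int.dvd_natAbs, ← Nat.modEq_iff_dvd]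
  have hpm : p ∈ (Nat.card G).primeFactors := by
    rw [Nat.mem_primeFactors]
    exact ⟨hp, (dvd_pow_self p hk0).trans hk, Nat.card_pos.ne'⟩
  rw [← Finset.add_sum_erase _ _ hpm]
  have h2 : ∑ q ∈ (Nat.card G).primeFactors.erase p, dgE G q ≡ 0 [MOD ordProj[p] (Nat.card G)] := by
    rw [Nat.modEq_zero_iff_dvd]
    refine Finset.dvd_sum fun q hq => dgE_dvd (Finset.ne_of_mem_erase hq)
  simpa using (dgE_spec (G := G) p).1.add h2

/-- preorder -/
def Lq (x y : G) : Prop := x ∈ Subgroup.zpowers y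

lemma Lq.refl (x : G) : Lq x x := Subgroup.mem_zpowers x
lemma Lq.trans {x y z : G} (h : Lq x y) (h' : Lq y z) : Lq x z :=
  (Subgroup.zpowers_le.2 h') h
lemma Lq.one (x : G) : Lq 1 x := one_mem _
lemma Lq.one_eq {x : G} (h : Lq x 1) : x = 1 := by
  simpa [Lq] using h
lemma Lq.of_eq_one {x : G} (h : x = 1) (y : G) : Lq x y := h ▸ Lq.one y
lemma Lq.map {x y : G} (p : ℕ) (h : Lq x y) : Lq (pc p x) (pc p y) := by
  obtain ⟨k, rfl⟩ := Subgroup.mem_zpowers_iff.1 h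
  rw [map_zpow]
  exact Subgroup.zpow_mem_zpowers _ _
lemma Lq.pc (p : ℕ) (x : G) : Lq (pc p x) x := Subgroup.npow_mem_zpowers x _

lemma Lq_iff {x y : G} : Lq x y ↔ ∀ p, Lq (pc p x) (pc p y) := by
  refine ⟨fun h p => h.map p, fun h => ?_⟩
  rw [← dg_sum x]
  exact Subgroup.prod_mem _ fun p _ => (h p).trans (Lq.pc p y)

lemma pc_not_prime {p : ℕ} (hp : ¬ (p ∈ (Nat.card G).primeFactors)) (x : G) : pc p x = 1 := by
  have := pc_pow p x
  rwa [show (Nat.card G).factorization p = 0 by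
    rwa [← Finsupp.notMem_support_iff, Nat.support_factorization], pow_zero, pow_one] at this

lemma prime_of_pc {p : ℕ} {x : G} (h : pc p x ≠ 1) : p.Prime := by
  by_contra hp
  exact h (pc_not_prime (fun h => hp (Nat.prime_of_mem_primeFactors h)) x)

/-- gluing -/
noncomputable def mkG (f : ℕ → G) : G := ∏ p ∈ (Nat.card G).primeFactors, pc p (f p)

lemma pc_mkG (f : ℕ → G) (p : ℕ) : pc p (mkG f) = pc p (f p) := by
  by_cases hp : p ∈ (Nat.card G).primeFactors
  · rw [mkG, map_prod, Finset.prod_eq_single p, pc_pc]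
    · intro q _ hq; exact pc_ne hq.symm _
    · intro h; exact absurd hp h
  · rw [pc_not_prime hp, pc_not_prime hp]

lemma mem_zpow_of_not_dvd {q k : ℕ} (hq : q.Prime) {z : G} (hz : z ^ (q ^ k) = 1) {i : ℤ}
    (hi : ¬ (q : ℤ) ∣ i) : Lq z (z ^ i) := by
  have hc : IsCoprime i ((q : ℤ) ^ k) :=
    (((Nat.prime_iff_prime_int.1 hq).coprime_iff_not_dvd.2 hi).symm).pow_right
  obtain ⟨a, b, hab⟩ := hc
  refine Subgroup.mem_zpowers_iff.2 ⟨a, ?_⟩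
  have h1 : z ^ ((q : ℤ) ^ k) = 1 := by exact_mod_cast hz
  rw [← zpow_mul]
  calc z ^ (i * a) = z ^ (i * a) * (z ^ ((q : ℤ) ^ k)) ^ b := by rw [h1]; simp
    _ = z ^ (a * i + b * (q : ℤ) ^ k) := by rw [← zpow_mul, ← zpow_add]; congr 1; ring
    _ = z := by rw [hab, zpow_one]

lemma total_aux {q : ℕ} (hq : q.Prime) (k : ℕ) : ∀ {z x y : G}, z ^ (q ^ k) = 1 → Lq x z → Lq y z →
    Lq x y ∨ Lq y x := by
  induction k with
  | zero =>
    intro z x y hz hx hy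
    have : z = 1 := by simpa using hz
    subst this
    exact Or.inl (Lq.of_eq_one hx.one_eq _)
  | succ k ih =>
    intro z x y hz hx hy
    obtain ⟨i, rfl⟩ := Subgroup.mem_zpowers_iff.1 hx
    obtain ⟨j, rfl⟩ := Subgroup.mem_zpowers_iff.1 hy
    by_cases hi : (q : ℤ) ∣ i
    · by_cases hj : (q : ℤ) ∣ j
      · obtain ⟨i, rfl⟩ := hi
        obtain ⟨j, rfl⟩ := hj
        refine ih (z := z ^ (q : ℤ)) ?_ ?_ ?_
        · rw [zpow_natCast, ← pow_mul, ← pow_succ']; exact hz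
        · rw [zpow_mul]; exact Subgroup.zpow_mem_zpowers _ _
        · rw [zpow_mul]; exact Subgroup.zpow_mem_zpowers _ _
      · exact Or.inl (hx.trans (mem_zpow_of_not_dvd hq hz hj))
    · exact Or.inr (hy.trans (mem_zpow_of_not_dvd hq hz hi))

lemma total_pc (p : ℕ) {x y z : G} (hx : Lq x (pc p z)) (hy : Lq y (pc p z)) : Lq x y ∨ Lq y x := by
  by_cases hp : p.Prime
  · exact total_aux hp _ (pc_pow p z) hx hy
  · have h : pc p z = 1 := by
      by_contra h
      exact hp (prime_of_pc h)
    rw [h] at hx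
    exact Or.inl (Lq.of_eq_one hx.one_eq _)

lemma cyc_iff (x y : G) : IsCyclic (Subgroup.closure ({x, y} : Set G)) ↔ ∃ z, Lq x z ∧ Lq y z := by
  constructor
  · intro h
    obtain ⟨z, hz⟩ := (Subgroup.isCyclic_iff_exists_zpowers_eq_top _).1 h
    refine ⟨z, ?_, ?_⟩ <;> unfold Lq <;> rw [hz] <;> apply Subgroup.subset_closure <;> simp
  · rintro ⟨z, hx, hy⟩
    have : Subgroup.closure ({x, y} : Set G) ≤ Subgroup.zpowers z := by
      rw [Subgroup.closure_le]
      rintro a (rfl | rfl)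
      exacts [hx, hy]
    exact isCyclic_of_injective (Subgroup.inclusion this) (Subgroup.inclusion_injective this)

lemma adj_iff (x y : G) : diffAdj x y ↔ (∀ p, Lq (pc p x) (pc p y) ∨ Lq (pc p y) (pc p x)) ∧
    (∃ p, ¬ Lq (pc p y) (pc p x)) ∧ (∃ p, ¬ Lq (pc p x) (pc p y)) := by
  classical
  unfold diffAdj
  have h1 : ∀ x y : G, (∃ k : ℤ, y = x ^ k) ↔ Lq y x := fun x y => by
    simp [Lq, Subgroup.mem_zpowers_iff, eq_comm]
  rw [h1, h1, cyc_iff, Lq_iff (x := y), Lq_iff (x := x) (y := y), not_forall, not_forall]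
  refine and_congr_left fun _ => ⟨?_, ?_⟩
  · rintro ⟨z, hx, hy⟩ p
    exact total_pc p (hx.map p) (hy.map p)
  · intro h
    refine ⟨mkG fun p => if Lq (pc p x) (pc p y) then y else x, ?_, ?_⟩
    · rw [Lq_iff]; intro p; rw [pc_mkG]; split_ifs with h'
      · exact h'
      · exact Lq.refl _
    · rw [Lq_iff]; intro p; rw [pc_mkG]; split_ifs with h'
      · exact Lq.refl _
      · exact (h p).resolve_left h'

lemma diffAdj_symm {x y : G} (h : diffAdj x y) : diffAdj y x := by
  rw [adj_iff] at *
  exact ⟨fun p => (h.1 p).symm, h.2.2, h.2.1⟩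

lemma vertex_iff (x : G) (h : ∃ y, diffAdj x y) : ∃ p q z, p ≠ q ∧ pc p x ≠ 1 ∧
    Lq (pc q x) (pc q z) ∧ ¬ Lq (pc q z) (pc q x) := by
  obtain ⟨y, hy⟩ := h
  obtain ⟨h, ⟨q, hq⟩, ⟨p, hp⟩⟩ := (adj_iff x y).1 hy
  have := (h q).resolve_right hq
  exact ⟨p, q, y, fun e => hp (e ▸ this), fun e => hp (Lq.of_eq_one e _), this, hq⟩

lemma adj_A1 {x z : G} {p q : ℕ} (hpq : p ≠ q) (hp : pc p x ≠ 1) (h1 : Lq (pc q x) (pc q z))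
    (h2 : ¬ Lq (pc q z) (pc q x)) : diffAdj x (pc q z) := by
  rw [adj_iff]
  refine ⟨fun r => ?_, ⟨q, ?_⟩, p, ?_⟩
  · by_cases hr : r = q
    · subst hr; rw [pc_pc]; exact Or.inl h1
    · rw [pc_ne hr]; exact Or.inr (Lq.one _)
  · rwa [pc_pc]
  · rw [pc_ne hpq]; exact fun h => hp h.one_eq

lemma adj_A2 {x z : G} {p q : ℕ} (hpq : p ≠ q) (hp : pc p x ≠ 1) (hq : pc q z ≠ 1) :
    diffAdj (pc p x) (pc q z) := by
  apply adj_A1 hpq (by rwa [pc_pc])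
  · rw [pc_ne hpq.symm]; exact Lq.one _
  · rw [pc_ne hpq.symm]; exact fun h => hq h.one_eq

/-- within distance -/
lemma ed1 {x y : DiffVertex G} (h : diffAdj x.1 y.1) : (diffGraph G).edist x y ≤ 1 := by
  have : (diffGraph G).Adj x y := by
    rw [diffGraph, SimpleGraph.fromRel_adj]
    refine ⟨?_, Or.inl h⟩
    rintro rfl
    exact h.2.1 ⟨1, by simp⟩
  exact (SimpleGraph.edist_eq_one_iff_adj.2 this).le

lemma adj_graph {x y : DiffVertex G} (h : (diffGraph G).Adj x y) : diffAdj x.1 y.1 := by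
  rw [diffGraph, SimpleGraph.fromRel_adj] at h
  exact h.2.elim id diffAdj_symm

lemma ed_add {x y z : DiffVertex G} {a b : ℕ∞} (h1 : (diffGraph G).edist x y ≤ a)
    (h2 : (diffGraph G).edist y z ≤ b) : (diffGraph G).edist x z ≤ a + b :=
  SimpleGraph.edist_triangle.trans (add_le_add h1 h2)

lemma ne_one_of_not {x y : G} (h : ¬ Lq x y) : x ≠ 1 := fun e => h (Lq.of_eq_one e _)

lemma upper4 (u v : DiffVertex G) : (diffGraph G).edist u v ≤ 4 := by
  obtain ⟨x, hx⟩ := u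
  obtain ⟨y, hy⟩ := v
  obtain ⟨p, q, z, hpq, hp, h1, h2⟩ := vertex_iff x hx
  obtain ⟨p', q', w, hpq', hp', h1', h2'⟩ := vertex_iff y hy
  have a1 := adj_A1 hpq hp h1 h2
  have a2 := adj_A1 hpq' hp' h1' h2'
  have hz := ne_one_of_not h2
  have hw := ne_one_of_not h2'
  let Z : DiffVertex G := ⟨pc q z, x, diffAdj_symm a1⟩
  let W : DiffVertex G := ⟨pc q' w, y, diffAdj_symm a2⟩
  have e1 : (diffGraph G).edist ⟨x, hx⟩ Z ≤ 1 := ed1 a1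
  have e2 : (diffGraph G).edist W ⟨y, hy⟩ ≤ 1 := ed1 (diffAdj_symm a2)
  by_cases hq : q = q'
  · subst hq
    have b1 := adj_A2 hpq hp hz
    have b2 := adj_A2 hpq hp hw
    let M : DiffVertex G := ⟨pc p x, _, b1⟩
    have e3 : (diffGraph G).edist Z M ≤ 1 := ed1 (diffAdj_symm b1)
    have e4 : (diffGraph G).edist M W ≤ 1 := ed1 b2
    exact (ed_add (ed_add e1 e3) (ed_add e4 e2)).trans (by norm_num)
  · have e3 : (diffGraph G).edist Z W ≤ 1 := ed1 (adj_A2 hq hz hw)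
    exact (ed_add (ed_add e1 e3) e2).trans (by norm_num)

lemma upper3 (hC : ∀ (q : ℕ) (x y z w : G), Lq (pc q x) (pc q z) → ¬ Lq (pc q z) (pc q x) →
      Lq (pc q y) (pc q w) → ¬ Lq (pc q w) (pc q y) →
      Lq (pc q x) (pc q y) ∨ Lq (pc q y) (pc q x)) (u v : DiffVertex G) :
    (diffGraph G).edist u v ≤ 3 := by
  obtain ⟨x, hx⟩ := u
  obtain ⟨y, hy⟩ := v
  obtain ⟨p, q, z, hpq, hp, h1, h2⟩ := vertex_iff x hx
  obtain ⟨p', q', w, hpq', hp', h1', h2'⟩ := vertex_iff y hy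
  have a1 := adj_A1 hpq hp h1 h2
  have a2 := adj_A1 hpq' hp' h1' h2'
  have hz := ne_one_of_not h2
  have hw := ne_one_of_not h2'
  let Z : DiffVertex G := ⟨pc q z, x, diffAdj_symm a1⟩
  let W : DiffVertex G := ⟨pc q' w, y, diffAdj_symm a2⟩
  have e1 : (diffGraph G).edist ⟨x, hx⟩ Z ≤ 1 := ed1 a1
  have e2 : (diffGraph G).edist W ⟨y, hy⟩ ≤ 1 := ed1 (diffAdj_symm a2)
  by_cases hq : q = q'
  · subst hq
    rcases hC q x y z w h1 h2 h1' h2' with h | h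
    · have b : diffAdj x (pc q w) := adj_A1 hpq hp (h.trans h1') (fun h' => h2' (h'.trans h))
      have e3 : (diffGraph G).edist ⟨x, hx⟩ W ≤ 1 := ed1 b
      exact (ed_add e3 e2).trans (by norm_num)
    · have b : diffAdj y (pc q z) := adj_A1 hpq' hp' (h.trans h1) (fun h' => h2 (h'.trans h))
      have e3 : (diffGraph G).edist Z ⟨y, hy⟩ ≤ 1 := ed1 (diffAdj_symm b)
      exact (ed_add e1 e3).trans (by norm_num)
  · have e3 : (diffGraph G).edist Z W ≤ 1 := ed1 (adj_A2 hq hz hw)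
    exact (ed_add (ed_add e1 e3) e2).trans (by norm_num)

lemma sqfree_aux (hs : Squarefree (Monoid.exponent G)) {q : ℕ} {x z : G}
    (h1 : Lq (pc q x) (pc q z)) (h2 : ¬ Lq (pc q z) (pc q x)) : pc q x = 1 := by
  have hz := ne_one_of_not h2
  have hq := prime_of_pc hz
  have hzq : pc q z ^ q = 1 := by
    obtain ⟨m, -, hm⟩ := (Nat.dvd_prime_pow hq).1 (orderOf_dvd_iff_pow_eq_one.2 (pc_pow q z))
    have h3 : q ^ m ∣ Monoid.exponent G := hm ▸ Monoid.order_dvd_exponent _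
    rw [← orderOf_dvd_iff_pow_eq_one, hm]
    have : m ≤ 1 := by
      by_contra hlt
      have : q * q ∣ Monoid.exponent G := by
        rw [← sq]; exact (pow_dvd_pow q (by omega)).trans h3
      exact hq.one_lt.ne' (Nat.isUnit_iff.1 (hs q this))
    simpa using pow_dvd_pow q this
  obtain ⟨i, hi⟩ := Subgroup.mem_zpowers_iff.1 h1
  by_cases hd : (q : ℤ) ∣ i
  · obtain ⟨j, rfl⟩ := hd
    rw [← hi, zpow_mul, zpow_natCast, hzq, one_zpow]
  · exact absurd (hi ▸ mem_zpow_of_not_dvd (k := 1) hq (by simpa using hzq) hd) h2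

lemma sq_adj {x y : G} {p q q' : ℕ} (hq : pc q x = 1) (hyq : pc q y ≠ 1) (hq' : pc q' x ≠ 1)
    (hp : pc p x ≠ 1) (hpq : p ≠ q) (hpq' : p ≠ q') : diffAdj x (pc q y * pc q' x) := by
  have hne : q ≠ q' := by rintro rfl; exact hq' hq
  rw [adj_iff]
  simp only [map_mul]
  refine ⟨fun r => ?_, ⟨q, ?_⟩, p, ?_⟩
  · by_cases h : r = q
    · subst h; exact Or.inl (Lq.of_eq_one hq _)
    · by_cases h' : r = q'
      · subst h'; rw [pc_ne h, pc_pc, one_mul]; exact Or.inl (Lq.refl _)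
      · rw [pc_ne h, pc_ne h', one_mul]; exact Or.inr (Lq.one _)
  · rw [pc_pc, pc_ne hne, mul_one, hq]; exact fun h => hyq h.one_eq
  · rw [pc_ne hpq, pc_ne hpq', mul_one]; exact fun h => hp h.one_eq

lemma upper2 (hs : Squarefree (Monoid.exponent G)) (u v : DiffVertex G) :
    (diffGraph G).edist u v ≤ 2 := by
  obtain ⟨x, hx⟩ := u
  obtain ⟨y, hy⟩ := v
  obtain ⟨p, q, z, hpq, hp, h1, h2⟩ := vertex_iff x hx
  obtain ⟨p', q', w, hpq', hp', h1', h2'⟩ := vertex_iff y hy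
  have a1 := adj_A1 hpq hp h1 h2
  have a2 := adj_A1 hpq' hp' h1' h2'
  have hz := ne_one_of_not h2
  have hw := ne_one_of_not h2'
  have hxq := sqfree_aux hs h1 h2
  have hyq := sqfree_aux hs h1' h2'
  have key : ∀ m : G, diffAdj x m → diffAdj y m →
      (diffGraph G).edist ⟨x, hx⟩ ⟨y, hy⟩ ≤ 2 := by
    intro m b1 b2
    let M : DiffVertex G := ⟨m, x, diffAdj_symm b1⟩
    have e1 : (diffGraph G).edist ⟨x, hx⟩ M ≤ 1 := ed1 b1
    have e2 : (diffGraph G).edist M ⟨y, hy⟩ ≤ 1 := ed1 (diffAdj_symm b2)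
    exact (ed_add e1 e2).trans (by norm_num)
  by_cases c1 : pc q y = 1
  · have hne : p' ≠ q := by rintro rfl; exact hp' c1
    refine key _ a1 (adj_A1 hne hp' ?_ ?_)
    · exact Lq.of_eq_one c1 _
    · rw [c1]; exact fun h => hz h.one_eq
  by_cases c2 : pc q' x = 1
  · have hne : p ≠ q' := by rintro rfl; exact hp c2
    refine key _ (adj_A1 hne hp ?_ ?_) a2
    · exact Lq.of_eq_one c2 _
    · rw [c2]; exact fun h => hw h.one_eq
  by_cases hA : diffAdj x y
  · exact (ed1 (x := ⟨x, hx⟩) (y := ⟨y, hy⟩) hA).trans (by norm_num)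
  have : ∃ r, ¬ (Lq (pc r x) (pc r y) ∨ Lq (pc r y) (pc r x)) := by
    by_contra hcon
    push Not at hcon
    refine hA ((adj_iff x y).2 ⟨fun r => ?_, ⟨q, ?_⟩, q', ?_⟩)
    · by_contra hh; exact hh (hcon r)
    · rw [hxq]; exact fun h => c1 h.one_eq
    · rw [hyq]; exact fun h => c2 h.one_eq
  obtain ⟨r, hr⟩ := this
  rw [not_or] at hr
  have hrx := ne_one_of_not hr.1
  have hry := ne_one_of_not hr.2
  have n1 : r ≠ q := by rintro rfl; exact hrx hxq
  have n2 : r ≠ q' := by rintro rfl; exact hry hyq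
  refine key _ (sq_adj hxq c1 c2 hrx n1 n2) ?_
  rw [mul_comm]
  exact sq_adj hyq c2 c1 hry n2 n1

/-! existence -/

lemma exists_max (G : Type*) [CommGroup G] [Finite G] :
    ∃ g : G, ∀ q z, Lq (pc q g) (pc q z) → Lq (pc q z) (pc q g) := by
  classical
  obtain ⟨g, hg⟩ := Finite.exists_max (fun g : G => orderOf g)
  refine ⟨g, fun q z h => ?_⟩
  let m : G := mkG fun r => if r = q then z else g
  have hm : Lq g m := by
    rw [Lq_iff]; intro r; rw [pc_mkG]
    split_ifs with hr
    · subst hr; exact h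
    · exact Lq.refl _
  have hle : Subgroup.zpowers g ≤ Subgroup.zpowers m := Subgroup.zpowers_le.2 hm
  have heq : Subgroup.zpowers g = Subgroup.zpowers m := by
    apply Subgroup.eq_of_le_of_card_ge hle
    rw [Nat.card_zpowers, Nat.card_zpowers]; exact hg m
  have : Lq m g := by unfold Lq; rw [heq]; exact Subgroup.mem_zpowers m
  have := this.map q
  rwa [pc_mkG, if_pos rfl] at this

lemma exists_other (hnc : ¬ IsCyclic G) (hpp : ¬ IsPrimePow (Nat.card G)) (p : ℕ) :
    ∃ q, q ≠ p ∧ ∃ t : G, pc q t ≠ 1 := by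
  by_contra hcon
  push Not at hcon
  have h1 : ∀ t : G, pc p t = t := by
    intro t
    conv_rhs => rw [← dg_sum t]
    by_cases hp : p ∈ (Nat.card G).primeFactors
    · rw [Finset.prod_eq_single_of_mem p hp]
      intro q _ hq; exact hcon q hq t
    · rw [pc_not_prime hp, Finset.prod_eq_one]
      intro q hq
      exact hcon q (by rintro rfl; exact hp hq) t
  by_cases hp : p.Prime
  · have : Fact p.Prime := ⟨hp⟩
    have : IsPGroup p G := fun t => ⟨_, by rw [← h1 t]; exact pc_pow p t⟩
    obtain ⟨n, hn⟩ := IsPGroup.iff_card.1 this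
    by_cases h0 : n = 0
    · subst h0
      apply hnc
      have : Subsingleton G := (Nat.card_eq_one_iff_unique.1 (by simpa using hn)).1
      infer_instance
    · exact hpp (hn ▸ hp.isPrimePow.pow h0)
  · apply hnc
    have : Subsingleton G := ⟨fun a b => by
      have : ∀ t : G, t = 1 := fun t => by
        by_contra ht
        rw [← h1 t] at ht
        exact hp (prime_of_pc ht)
      rw [this a, this b]⟩
    infer_instance

lemma diam_eq {V : Type*} {Γ : SimpleGraph V} {n : ℕ} (h1 : ∀ u v, Γ.edist u v ≤ ((n + 1 : ℕ) : ℕ∞))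
    (h2 : ∃ u v, ¬ Γ.edist u v ≤ (n : ℕ∞)) : Γ.diam = n + 1 := by
  obtain ⟨u, v, h⟩ := h2
  have : Γ.ediam = ((n + 1 : ℕ) : ℕ∞) := by
    refine le_antisymm (SimpleGraph.ediam_le_of_edist_le h1) ?_
    refine le_trans ?_ (SimpleGraph.edist_le_ediam (u := u) (v := v))
    push_cast
    exact Order.add_one_le_of_lt (not_le.1 h)
  rw [SimpleGraph.diam, this]; rfl

lemma walk_step {V : Type*} {Γ : SimpleGraph V} {n : ℕ} {u v : V} (h : Γ.edist u v ≤ ((n + 1 : ℕ) : ℕ∞)) :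
    u = v ∨ ∃ w, Γ.Adj u w ∧ Γ.edist w v ≤ (n : ℕ∞) := by
  obtain ⟨p, hp⟩ := SimpleGraph.exists_walk_of_edist_ne_top (ne_top_of_le_ne_top (ENat.natCast_ne_top _) h)
  rw [← hp] at h
  cases p with
  | nil => exact Or.inl rfl
  | cons h' p =>
    refine Or.inr ⟨_, h', (SimpleGraph.edist_le p).trans ?_⟩
    simp only [SimpleGraph.Walk.length_cons] at h
    have : p.length + 1 ≤ n + 1 := by exact_mod_cast h
    exact_mod_cast (by omega : p.length ≤ n)

lemma walk_zero {V : Type*} {Γ : SimpleGraph V} {u v : V} (h : Γ.edist u v ≤ ((0 : ℕ) : ℕ∞)) : u = v := by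
  simpa using h

lemma lower2 (hnc : ¬ IsCyclic G) (hpp : ¬ IsPrimePow (Nat.card G)) :
    ∃ u v, ¬ (diffGraph G).edist u v ≤ ((1 : ℕ) : ℕ∞) := by
  obtain ⟨g, hg⟩ := exists_max G
  have : ∃ h p, ¬ Lq (pc p h) (pc p g) := by
    by_contra hcon
    push Not at hcon
    exact hnc ⟨g, fun h => Lq_iff.2 (hcon h)⟩
  obtain ⟨h, p, hh⟩ := this
  have hh' : ¬ Lq (pc p g) (pc p h) := fun h' => hh (hg _ _ h')
  obtain ⟨q, hqp, t, ht⟩ := exists_other hnc hpp p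
  refine ⟨⟨pc p g, _, adj_A2 hqp.symm (ne_one_of_not hh') ht⟩,
    ⟨pc p h, _, adj_A2 hqp.symm (ne_one_of_not hh) ht⟩, fun hle => ?_⟩
  have hle' := SimpleGraph.edist_le_one_iff_adj_or_eq.1 (by simpa using hle)
  rcases hle' with h1 | h1
  · have := ((adj_iff _ _).1 (adj_graph h1)).1 p
    simp only [pc_pc] at this
    exact this.elim hh' hh
  · have : pc p g = pc p h := congrArg Subtype.val h1
    exact hh (this ▸ Lq.refl _)

/-- element with component `a` at `p` and maximal elsewhere -/
lemma exists_sp (hnc : ¬ IsCyclic G) (hpp : ¬ IsPrimePow (Nat.card G)) (p : ℕ) (a b : G)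
    (h1 : Lq (pc p a) (pc p b)) (h2 : ¬ Lq (pc p b) (pc p a)) :
    ∃ x : G, (∃ y, diffAdj x y) ∧ pc p x = pc p a ∧ (∃ q, q ≠ p ∧ pc q x ≠ 1) ∧
      ∀ z, diffAdj x z → Lq (pc p x) (pc p z) ∧ ¬ Lq (pc p z) (pc p x) := by
  classical
  obtain ⟨g, hg⟩ := exists_max G
  obtain ⟨q, hqp, t, ht⟩ := exists_other hnc hpp p
  have hgq : pc q g ≠ 1 := by
    intro h
    have := hg q t (Lq.of_eq_one h _)
    rw [h] at this
    exact ht this.one_eq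
  have hx : ∀ r, pc r (mkG fun r => if r = p then a else g) = if r = p then pc r a else pc r g := by
    intro r; rw [pc_mkG]; split_ifs <;> rfl
  generalize (mkG fun r => if r = p then a else g) = x at hx
  have hxp : pc p x = pc p a := by rw [hx, if_pos rfl]
  have hxq : pc q x ≠ 1 := by rwa [hx, if_neg hqp]
  refine ⟨x, ⟨_, adj_A1 hqp hxq (z := b) ?_ ?_⟩, hxp, ⟨q, hqp, hxq⟩, fun z hz => ?_⟩
  · rwa [hxp]
  · rwa [hxp]
  · obtain ⟨c, ⟨r, hr⟩, -⟩ := (adj_iff x z).1 hz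
    have h3 := (c r).resolve_right hr
    by_cases hrp : r = p
    · subst hrp; exact ⟨h3, hr⟩
    · rw [hx, if_neg hrp] at h3 hr
      exact absurd (hg r z h3) hr

lemma lower3 (hnc : ¬ IsCyclic G) (hpp : ¬ IsPrimePow (Nat.card G))
    (hs : ¬ Squarefree (Monoid.exponent G)) :
    ∃ u v, ¬ (diffGraph G).edist u v ≤ ((2 : ℕ) : ℕ∞) := by
  obtain ⟨p, hp, hpd⟩ : ∃ p, p.Prime ∧ p * p ∣ Monoid.exponent G := by
    rw [Nat.squarefree_iff_prime_squarefree] at hs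
    push Not at hs
    exact hs
  obtain ⟨g, hg⟩ := Monoid.exists_orderOf_eq_exponent (G := G) Monoid.ExponentExists.of_finite
  obtain ⟨m, hm⟩ := hpd
  have he : Monoid.exponent G ≠ 0 := Monoid.exponent_ne_zero_of_finite
  have hm0 : m ≠ 0 := by rintro rfl; simp at hm; exact he hm
  have hob : orderOf (g ^ m) = p * p := by
    rw [orderOf_pow_of_dvd hm0 (by rw [hg, hm]; exact Dvd.intro_left _ rfl), hg, hm,
      Nat.mul_div_cancel _ (Nat.pos_of_ne_zero hm0)]
  generalize g ^ m = b at hob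
  have hb : pc p b = b := pc_eq_self hp (k := 2) (by rw [sq, ← hob, pow_orderOf_eq_one])
  have hoa : orderOf (b ^ p) = p := by
    rw [orderOf_pow_of_dvd hp.ne_zero (by rw [hob]; exact Dvd.intro _ rfl), hob,
      Nat.mul_div_cancel _ hp.pos]
  have ha : pc p (b ^ p) = b ^ p := by rw [map_pow, hb]
  have h1 : Lq (pc p (b ^ p)) (pc p b) := by rw [ha, hb]; exact Subgroup.npow_mem_zpowers _ _
  have h2 : ¬ Lq (pc p b) (pc p (b ^ p)) := by
    rw [ha, hb]; intro h
    have := orderOf_dvd_of_mem_zpowers h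
    rw [hob, hoa] at this
    have := Nat.le_of_dvd hp.pos this
    nlinarith [hp.two_le]
  have ha1 : b ^ p ≠ 1 := by
    intro h; rw [h, orderOf_one] at hoa; exact hp.one_lt.ne hoa
  obtain ⟨x, hxv, hxp, ⟨q, hqp, hxq⟩, hx⟩ := exists_sp hnc hpp p _ b h1 h2
  have hxp1 : pc p x ≠ 1 := by rw [hxp, ha]; exact ha1
  have hyv := adj_A2 hqp.symm hxp1 hxq
  have hny : ∀ z, diffAdj x z → ¬ diffAdj z (pc p x) := by
    intro z hz hzy
    obtain ⟨-, -, r, hr⟩ := (adj_iff _ _).1 (diffAdj_symm hzy)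
    by_cases hrp : r = p
    · subst hrp; rw [pc_pc] at hr; exact hr (hx z hz).1
    · rw [pc_ne hrp] at hr; exact hr (Lq.one _)
  refine ⟨⟨x, hxv⟩, ⟨pc p x, _, hyv⟩, fun hle => ?_⟩
  have hne : x ≠ pc p x := by
    intro h; apply hxq; rw [h, pc_ne hqp]
  rcases walk_step (n := 1) hle with h | ⟨w, hw, hle⟩
  · exact hne (congrArg Subtype.val h)
  · rcases walk_step (n := 0) hle with h | ⟨w', hw', hle⟩
    · have hw1 := adj_graph hw
      have := (hx w.1 hw1).2
      rw [h] at this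
      simp only [pc_pc] at this
      exact this (Lq.refl _)
    · have := walk_zero hle
      subst this
      have hw1 := adj_graph hw
      have hw2 := adj_graph hw'
      exact hny _ hw1 hw2

lemma lower4 (hnc : ¬ IsCyclic G) (hpp : ¬ IsPrimePow (Nat.card G)) {p : ℕ} (hp : p.Prime) {a b : G}
    (ha : orderOf a = p ^ 2) (hb : orderOf b = p ^ 2)
    (hab : ∀ t, Lq t a → Lq t b → t = 1) :
    ∃ u v, ¬ (diffGraph G).edist u v ≤ ((3 : ℕ) : ℕ∞) := by
  have main : ∀ b : G, orderOf b = p ^ 2 → pc p b = b ∧ b ^ p ≠ 1 ∧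
    ∃ x : G, (∃ y, diffAdj x y) ∧ pc p x = b ^ p ∧
      ∀ z, diffAdj x z → Lq (pc p x) (pc p z) ∧ ¬ Lq (pc p z) (pc p x) := by
    intro b hob
    have hb : pc p b = b := pc_eq_self hp (k := 2) (by rw [← hob, pow_orderOf_eq_one])
    have hoa : orderOf (b ^ p) = p := by
      rw [orderOf_pow_of_dvd hp.ne_zero (by rw [hob]; exact dvd_pow_self p two_ne_zero), hob, sq,
        Nat.mul_div_cancel _ hp.pos]
    have ha : pc p (b ^ p) = b ^ p := by rw [map_pow, hb]
    have h1 : Lq (pc p (b ^ p)) (pc p b) := by rw [ha, hb]; exact Subgroup.npow_mem_zpowers _ _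
    have h2 : ¬ Lq (pc p b) (pc p (b ^ p)) := by
      rw [ha, hb]; intro h
      have := orderOf_dvd_of_mem_zpowers h
      rw [hob, hoa] at this
      have := Nat.le_of_dvd hp.pos this
      nlinarith [hp.two_le]
    have ha1 : b ^ p ≠ 1 := by
      intro h; rw [h, orderOf_one] at hoa; exact hp.one_lt.ne hoa
    obtain ⟨x, hxv, hxp, -, hx⟩ := exists_sp hnc hpp p _ b h1 h2
    exact ⟨hb, ha1, x, hxv, by rw [hxp, ha], hx⟩
  obtain ⟨ha', ha1, x, hxv, hxp, hx⟩ := main a ha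
  obtain ⟨hb', hb1, y, hyv, hyp, hy⟩ := main b hb
  have hinc : ¬ (Lq (pc p x) (pc p y) ∨ Lq (pc p y) (pc p x)) := by
    rw [hxp, hyp]
    rintro (h | h)
    · exact ha1 (hab _ (Subgroup.npow_mem_zpowers _ _) (h.trans (Subgroup.npow_mem_zpowers _ _)))
    · exact hb1 (hab _ (h.trans (Subgroup.npow_mem_zpowers _ _)) (Subgroup.npow_mem_zpowers _ _))
  have hcom : ∀ z w, diffAdj x z → diffAdj y w → ¬ (Lq (pc p z) (pc p w) ∨ Lq (pc p w) (pc p z)) := by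
    intro z w hz hw h
    have h1 := (hx z hz).1
    have h2 := (hy w hw).1
    rcases h with h | h
    · exact hinc (total_pc p (h1.trans h) h2)
    · exact hinc (total_pc p h1 (h2.trans h))
  refine ⟨⟨x, hxv⟩, ⟨y, hyv⟩, fun hle => ?_⟩
  rcases walk_step (n := 2) hle with h | ⟨w, hw, hle⟩
  · have : x = y := congrArg Subtype.val h
    exact hinc (by rw [this]; exact Or.inl (Lq.refl _))
  replace hw := adj_graph hw
  rcases walk_step (n := 1) hle with h | ⟨w', hw', hle⟩
  · rw [h] at hw
    exact hinc (((adj_iff _ _).1 hw).1 p)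
  replace hw' := adj_graph hw'
  rcases walk_step (n := 0) hle with h | ⟨w'', hw'', hle⟩
  · rw [h] at hw'
    exact hcom _ _ hw (diffAdj_symm hw') (Or.inl (Lq.refl _))
  · have := walk_zero hle
    subst this
    have hw3 := diffAdj_symm (adj_graph hw'')
    exact hcom _ _ hw hw3 (((adj_iff _ _).1 hw').1 p)

lemma exists_of_sub {p : ℕ} (H : Subgroup G)
    (e : H ≃* (Multiplicative (ZMod (p ^ 2)) × Multiplicative (ZMod (p ^ 2)))) :
    ∃ a b : G, orderOf a = p ^ 2 ∧ orderOf b = p ^ 2 ∧ ∀ t, Lq t a → Lq t b → t = 1 := by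
  let α : Multiplicative (ZMod (p ^ 2)) := Multiplicative.ofAdd 1
  have hα : orderOf α = p ^ 2 := by
    rw [orderOf_ofAdd_eq_addOrderOf, ZMod.addOrderOf_one]
  refine ⟨e.symm (α, 1), e.symm (1, α), ?_, ?_, ?_⟩
  · rw [Subgroup.orderOf_coe, MulEquiv.orderOf_eq, Prod.orderOf_mk, hα, orderOf_one, Nat.lcm_one_right]
  · rw [Subgroup.orderOf_coe, MulEquiv.orderOf_eq, Prod.orderOf_mk, hα, orderOf_one, Nat.lcm_one_left]
  · intro t h1 h2
    obtain ⟨i, hi⟩ := Subgroup.mem_zpowers_iff.1 h1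
    obtain ⟨j, hj⟩ := Subgroup.mem_zpowers_iff.1 h2
    have h3 : e.symm ((α, 1) ^ i) = e.symm ((1, α) ^ j) := by
      apply Subtype.ext
      rw [map_zpow, map_zpow]
      push_cast
      rw [hi, hj]
    have h4 := e.symm.injective h3
    have h5 : α ^ i = 1 := by simpa using congrArg Prod.fst h4
    rw [← hi, ← Subgroup.coe_zpow, ← map_zpow, Prod.pow_mk, h5, one_zpow]
    simp [← Prod.one_eq_mk]

lemma exists_sub {p : ℕ} {a b : G} (ha : orderOf a = p ^ 2) (hb : orderOf b = p ^ 2)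
    (hab : ∀ t, Lq t a → Lq t b → t = 1) : ∃ H : Subgroup G,
    Nonempty (H ≃* (Multiplicative (ZMod (p ^ 2)) × Multiplicative (ZMod (p ^ 2)))) := by
  let f : Subgroup.zpowers a × Subgroup.zpowers b →* G :=
    (Subgroup.zpowers a).subtype.coprod (Subgroup.zpowers b).subtype
  have hf : Function.Injective f := by
    rw [injective_iff_map_eq_one]
    rintro ⟨⟨s, hs⟩, ⟨t, ht⟩⟩ h
    have h' : s * t = 1 := h
    have hst : s = t⁻¹ := eq_inv_of_mul_eq_one_left h'
    have hs1 : s = 1 := hab s hs (by rw [hst]; exact inv_mem ht)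
    have ht1 : t = 1 := by rwa [hs1, one_mul] at h'
    subst hs1 ht1
    rfl
  have e : ∀ c : G, orderOf c = p ^ 2 → Nonempty (Subgroup.zpowers c ≃* Multiplicative (ZMod (p ^ 2))) := by
    intro c hc
    refine ⟨mulEquivOfCyclicCardEq ?_⟩
    rw [Nat.card_zpowers, hc, Nat.card_congr Multiplicative.toAdd, Nat.card_zmod]
  obtain ⟨ea⟩ := e a ha
  obtain ⟨eb⟩ := e b hb
  exact ⟨f.range, ⟨(MonoidHom.ofInjective hf).symm.trans (ea.prodCongr eb)⟩⟩

/-- an element of order `q` -/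
lemma exists_ord {q k : ℕ} (hq : q.Prime) {y : G} (hy : y ^ (q ^ k) = 1) (hy1 : y ≠ 1) :
    ∃ v, Lq v y ∧ orderOf v = q := by
  obtain ⟨m, -, hm⟩ := (Nat.dvd_prime_pow hq).1 (orderOf_dvd_iff_pow_eq_one.2 hy)
  have hm0 : m ≠ 0 := by
    rintro rfl; apply hy1; simpa using hm
  obtain ⟨m, rfl⟩ := Nat.exists_eq_succ_of_ne_zero hm0
  refine ⟨y ^ (q ^ m), Subgroup.npow_mem_zpowers _ _, ?_⟩
  rw [orderOf_pow_of_dvd (pow_ne_zero _ hq.ne_zero) (by rw [hm]; exact pow_dvd_pow q (Nat.le_succ m)), hm,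
    pow_succ, Nat.mul_div_cancel_left _ (pow_pos hq.pos m)]

lemma exists_uv {q k : ℕ} (hq : q.Prime) {x y : G} (hx : x ^ (q ^ k) = 1) (hy : y ^ (q ^ k) = 1)
    (h1 : ¬ Lq x y) (h2 : ¬ Lq y x) (K : Subgroup G) (hxK : x ∈ K) (hyK : y ∈ K) :
    ∃ u v, u ∈ K ∧ v ∈ K ∧ orderOf u = q ∧ orderOf v = q ∧ ¬ Lq u v := by
  classical
  have hex : ∃ m, Lq (x ^ (q ^ m)) y := ⟨k, Lq.of_eq_one hx _⟩
  have hs := Nat.find_spec hex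
  have hmin := fun m => Nat.find_min hex (m := m)
  generalize Nat.find hex = m at hs hmin
  have hm0 : m ≠ 0 := by rintro rfl; apply h1; simpa using hs
  obtain ⟨m, rfl⟩ := Nat.exists_eq_succ_of_ne_zero hm0
  have hn := hmin m (Nat.lt_succ_self m)
  obtain ⟨j, hj⟩ := Subgroup.mem_zpowers_iff.1 hs
  have hdj : (q : ℤ) ∣ j := by
    by_contra hd
    apply h2
    refine (mem_zpow_of_not_dvd hq hy hd).trans ?_
    rw [hj]; exact Subgroup.npow_mem_zpowers _ _
  obtain ⟨j, rfl⟩ := hdj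
  obtain ⟨v, hv, hov⟩ := exists_ord hq hy (ne_one_of_not h2)
  have hu : ¬ Lq (x ^ (q ^ m) * (y ^ j)⁻¹) y := by
    intro h
    apply hn
    have := Subgroup.mul_mem _ h (Subgroup.zpow_mem_zpowers y j)
    rwa [inv_mul_cancel_right] at this
  have huq : (x ^ (q ^ m) * (y ^ j)⁻¹) ^ q = 1 := by
    rw [mul_pow, ← pow_mul, ← pow_succ, ← Nat.succ_eq_add_one, ← hj, inv_pow, ← zpow_natCast (y ^ j), ← zpow_mul,
      mul_comm j, mul_inv_cancel]
  refine ⟨_, v, K.mul_mem (K.pow_mem hxK _) (K.inv_mem (K.zpow_mem hyK j)),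
    (Subgroup.zpowers_le.2 hyK) hv, ?_, hov, fun h => hu (h.trans hv)⟩
  have : Fact q.Prime := ⟨hq⟩
  exact orderOf_eq_prime huq (ne_one_of_not hu)

lemma hC_of (hno : ¬ (∃ (p : ℕ), p.Prime ∧ ∃ H : Subgroup G,
      Nonempty (H ≃* (Multiplicative (ZMod (p ^ 2)) × Multiplicative (ZMod (p ^ 2))))))
    (q : ℕ) (x y z w : G) (h1 : Lq (pc q x) (pc q z)) (h2 : ¬ Lq (pc q z) (pc q x))
    (h3 : Lq (pc q y) (pc q w)) (h4 : ¬ Lq (pc q w) (pc q y)) :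
    Lq (pc q x) (pc q y) ∨ Lq (pc q y) (pc q x) := by
  by_contra hcon
  rw [not_or] at hcon
  have hq := prime_of_pc (ne_one_of_not h2)
  apply hno
  refine ⟨q, hq, ?_⟩
  let K : Subgroup G := ((powMonoidHom q).comp (pc q : G →* G)).range
  have hK : ∀ x z : G, Lq (pc q x) (pc q z) → ¬ Lq (pc q z) (pc q x) → pc q x ∈ K := by
    intro x z h1 h2
    obtain ⟨i, hi⟩ := Subgroup.mem_zpowers_iff.1 h1
    have : (q : ℤ) ∣ i := by
      by_contra hd
      exact h2 (hi ▸ mem_zpow_of_not_dvd hq (pc_pow q z) hd)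
    obtain ⟨i, rfl⟩ := this
    refine ⟨z ^ i, ?_⟩
    simp only [MonoidHom.comp_apply, powMonoidHom_apply]
    rw [← hi, map_zpow, ← zpow_natCast, ← zpow_mul, mul_comm]
  obtain ⟨u, v, ⟨a, ha⟩, ⟨b, hb⟩, hou, hov, huv⟩ := exists_uv hq (pc_pow q x) (pc_pow q y) hcon.1 hcon.2 K
    (hK _ _ h1 h2) (hK _ _ h3 h4)
  simp only [MonoidHom.comp_apply, powMonoidHom_apply] at ha hb
  have : Fact q.Prime := ⟨hq⟩
  have ho : ∀ a u : G, pc q a ^ q = u → orderOf u = q → orderOf (pc q a) = q ^ 2 := by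
    intro a u ha hou
    refine orderOf_eq_prime_pow (n := 1) ?_ ?_
    · rw [pow_one, ha]; intro h; rw [h, orderOf_one] at hou; exact hq.one_lt.ne hou
    · rw [pow_succ, pow_one, pow_mul, ha, ← hou, pow_orderOf_eq_one]
  have hgen : ∀ s u : G, Lq s u → orderOf s = q → orderOf u = q → Lq u s := by
    intro s u h hs hu
    have hle : Subgroup.zpowers s ≤ Subgroup.zpowers u := Subgroup.zpowers_le.2 h
    have heq := Subgroup.eq_of_le_of_card_ge hle (by rw [Nat.card_zpowers, Nat.card_zpowers, hs, hu])
    unfold Lq; rw [heq]; exact Subgroup.mem_zpowers u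
  have hgen2 : ∀ a u s : G, pc q a ^ q = u → orderOf u = q → Lq s (pc q a) → orderOf s = q →
      Lq s u ∧ Lq u s := by
    intro a u s ha hou hs hos
    have hua : Lq u (pc q a) := ha ▸ Subgroup.npow_mem_zpowers _ _
    rcases total_pc q hua hs with h | h
    · exact ⟨hgen _ _ h hou hos, h⟩
    · exact ⟨h, hgen _ _ h hos hou⟩
  refine exists_sub (ho a u ha hou) (ho b v hb hov) fun t h5 h6 => ?_
  by_contra ht
  have htp : t ^ (q ^ 2) = 1 := by
    rw [← orderOf_dvd_iff_pow_eq_one, ← ho a u ha hou]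
    exact orderOf_dvd_of_mem_zpowers h5
  obtain ⟨s, hst, hos⟩ := exists_ord hq htp ht
  exact huv ((hgen2 a u s ha hou (hst.trans h5) hos).2.trans (hgen2 b v s hb hov (hst.trans h6) hos).1)

end DG

/-- Corollary 5.10: for a finite non-cyclic abelian group `G` whose order is not a prime
power, the diameter of `𝒟(G)` equals `2` if `exp(G)` is square-free, `4` if `G` has a
subgroup isomorphic to `ℤ_{p²} × ℤ_{p²}` for some prime `p`, and `3` otherwise. -/
theorem abelian_diffGraph_diam
    (G : Type*) [CommGroup G] [Finite G]
    (hnc : ¬ IsCyclic G) (hpp : ¬ IsPrimePow (Nat.card G)) :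
    (Squarefree (Monoid.exponent G) → (diffGraph G).diam = 2) ∧
    ((∃ (p : ℕ), p.Prime ∧ ∃ H : Subgroup G,
        Nonempty (H ≃* (Multiplicative (ZMod (p ^ 2)) × Multiplicative (ZMod (p ^ 2))))) →
      (diffGraph G).diam = 4) ∧
    (¬ Squarefree (Monoid.exponent G) →
      ¬ (∃ (p : ℕ), p.Prime ∧ ∃ H : Subgroup G,
          Nonempty (H ≃* (Multiplicative (ZMod (p ^ 2)) × Multiplicative (ZMod (p ^ 2))))) →
      (diffGraph G).diam = 3) := by
  refine ⟨fun hs => ?_, ?_, fun hs hno => ?_⟩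
  · exact diam_eq (n := 1) (fun u v => by simpa using upper2 hs u v) (lower2 hnc hpp)
  · rintro ⟨p, hp, H, ⟨e⟩⟩
    obtain ⟨a, b, ha, hb, hab⟩ := exists_of_sub H e
    exact diam_eq (n := 3) (fun u v => by simpa using upper4 u v) (lower4 hnc hpp hp ha hb hab)
  · exact diam_eq (n := 2) (fun u v => by simpa using upper3 (hC_of hno) u v) (lower3 hnc hpp hs)
end
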